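/- There exists a complex number ρ₀ with 1.1 < Re(ρ₀) < 1.25 and 3.3 < Im(ρ₀) < 3.55 such that the set of zeros of f₂ in the closed right half-plane Re(s) ≥ 1/2 is exactly {2, ρ₀, conj(ρ₀)}, and each of these three zeros is simple (the derivative of f₂ does not vanish there). -/

import Mathlib

open Complex

noncomputable def chi (s : ℂ) : ℂ := s * (s - 1) * completedRiemannZeta₀ s + 1

noncomputable def A : ℂ := Real.pi / 3 - 1

noncomputable def f1 (s : ℂ) : ℂ :=
  (s - 1) * ((s - 1) * (3 * s - 2) * (A * s - A + 1) * chi (s + 1) * chi (3 * s)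
    - (s + 1) * (s - 2) * chi s * chi (3 * s - 1)
    - 2 * (s - 1) * (s - 2) * chi s * chi (3 * s))

noncomputable def f2 (s : ℂ) : ℂ :=
  (s - 2) * ((A * s + 3) * (s - 1) ^ 2 * chi (s + 2)
    - 2 * (s - 1) * (s - 3) * chi (s + 1)
    - (s + 2) * (s - 3) * chi s)

noncomputable def Z1 (s : ℂ) : ℂ := chi (2 * s) * f1 s - chi (2 * s - 1) * f1 (1 - s)

noncomputable def Z2 (s : ℂ) : ℂ := chi (2 * s) * f2 s - chi (2 * s - 1) * f2 (1 - s)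

/-!
Write `g` for the cofactor of `s - 2` in `f₂`. The open mapping theorem, made quantitative around
`1.17 + 3.4293 i`, produces a zero `ρ` of `g`. The quotient
`g(s) / ((A s + 3) χ(s + 2) (s - ρ) (s - conj ρ))` is holomorphic and bounded for `Re s ≥ 1/2`.
Once its real part is positive on the line `Re s = 1/2`, the Phragmén–Lindelöf principle makes it
positive on the whole half-plane, so `ρ` and `conj ρ` are the only zeros of `g` there, and they are
simple.

On the critical line, positivity at height `t ≥ 12.8` follows from `‖χ(s)‖ ≤ ‖χ(s + 1)‖`, which is
a consequence of the functional equation and the same Phragmén–Lindelöf principle. For `t < 12.8`,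
as for the existence of `ρ`, the completed zeta function is replaced by a polynomial with a
rigorous error bound: `Λ₀(1/2 + z)` is the integral over `u > 0` of `2 cosh (z u)` times an
explicit theta kernel, and both factors are approximated by polynomials in `u`. The resulting
inequalities are settled by exact disc arithmetic over the Gaussian integers.
-/

open MeasureTheory Set Filter Topology
open scoped ComplexConjugate

/-! ### Fourier–Laplace representation of the completed zeta function -/

/-- The theta function without its constant term, `θ(x) - 1 = 2 ∑_{n ≥ 1} exp (-π n² x)`. -/
noncomputable def thetaTail (x : ℝ) : ℝ := HurwitzZeta.evenKernel 0 x - 1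

/-- The kernel `(θ(e^{2u}) - 1) e^{u/2}`, whose integral against `2 cosh (z u)` over `u > 0` is
`completedRiemannZeta₀ (1 / 2 + z)`. -/
noncomputable def xiKernel (u : ℝ) : ℝ := thetaTail (Real.exp (2 * u)) * Real.exp (u / 2)

/-- The restriction of `thetaTail` to `(1, ∞)`, extended by zero. -/
noncomputable def truncThetaTail : ℝ → ℂ := (Ioi 1).indicator fun x ↦ (thetaTail x : ℂ)

lemma hasSum_thetaTail {x : ℝ} (hx : 0 < x) :
    HasSum (fun n : ℤ ↦ if n = 0 then 0 else Real.exp (-Real.pi * (n : ℝ) ^ 2 * x))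
      (thetaTail x) := by
  simpa [thetaTail] using HurwitzZeta.hasSum_int_evenKernel₀ 0 hx

lemma thetaTail_nonneg {x : ℝ} (hx : 0 < x) : 0 ≤ thetaTail x :=
  (hasSum_thetaTail hx).nonneg fun n ↦ by split_ifs <;> positivity

lemma xiKernel_nonneg (u : ℝ) : 0 ≤ xiKernel u :=
  mul_nonneg (thetaTail_nonneg (Real.exp_pos _)) (Real.exp_pos _).le

lemma hurwitzEvenFEPair_f_modif_of_one_lt {x : ℝ} (hx : 1 < x) :
    (HurwitzZeta.hurwitzEvenFEPair 0).f_modif x = thetaTail x := by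
  simp [WeakFEPair.f_modif, hx, not_lt.mpr hx.le, HurwitzZeta.hurwitzEvenFEPair, thetaTail]

lemma hurwitzEvenFEPair_f_modif_of_lt_one {x : ℝ} (hx : 0 < x) (hx1 : x < 1) :
    (HurwitzZeta.hurwitzEvenFEPair 0).f_modif x =
      (x : ℂ) ^ (-(1 / 2) : ℂ) * thetaTail x⁻¹ := by
  have g_modif_eq : (HurwitzZeta.hurwitzEvenFEPair 0).g_modif =
      (HurwitzZeta.hurwitzEvenFEPair 0).f_modif := by
    conv_rhs => rw [← HurwitzZeta.hurwitzEvenFEPair_zero_symm]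
    simp [WeakFEPair.g_modif, WeakFEPair.f_modif, WeakFEPair.symm]
  have functional_eq := (HurwitzZeta.hurwitzEvenFEPair 0).hf_modif_FE x⁻¹ (inv_pos.mpr hx)
  rw [g_modif_eq, hurwitzEvenFEPair_f_modif_of_one_lt ((one_lt_inv₀ hx).mpr hx1), one_div,
    inv_inv] at functional_eq
  rw [functional_eq]
  simp only [HurwitzZeta.hurwitzEvenFEPair, one_mul, smul_eq_mul]
  rw [Real.inv_rpow hx.le, ← Real.rpow_neg hx.le, ofReal_cpow hx.le]
  norm_num

lemma hurwitzEvenFEPair_f_modif_eq {x : ℝ} (hx : 0 < x) :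
    (HurwitzZeta.hurwitzEvenFEPair 0).f_modif x =
      truncThetaTail x + (x : ℂ) ^ (-(1 / 2) : ℂ) • truncThetaTail x⁻¹ := by
  rcases lt_trichotomy 1 x with h | rfl | h
  · have hinv : ¬1 < x⁻¹ := not_lt.mpr (inv_le_one_of_one_le₀ h.le)
    simp [truncThetaTail, hurwitzEvenFEPair_f_modif_of_one_lt h, h, hinv]
  · simp [truncThetaTail, WeakFEPair.f_modif]
  · have hinv : 1 < x⁻¹ := (one_lt_inv₀ hx).mpr h
    rw [hurwitzEvenFEPair_f_modif_of_lt_one hx h]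
    simp only [truncThetaTail, indicator_of_notMem (notMem_Ioi.mpr h.le),
      indicator_of_mem (mem_Ioi.mpr hinv), zero_add, smul_eq_mul]

lemma cpow_smul_truncThetaTail (s : ℂ) : (fun x : ℝ ↦ (x : ℂ) ^ s • truncThetaTail x) =
    (Ioi 1).indicator fun x : ℝ ↦ (x : ℂ) ^ s • (thetaTail x : ℂ) := by
  ext x
  by_cases hx : x ∈ Ioi 1 <;> simp [truncThetaTail, hx]

lemma integrableOn_cpow_smul_thetaTail (s : ℂ) :
    IntegrableOn (fun x : ℝ ↦ (x : ℂ) ^ (s - 1) • (thetaTail x : ℂ)) (Ioi 1) := by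
  have h := ((HurwitzZeta.hurwitzEvenFEPair 0).isStrongFEPair_toStrongFEPair.hasMellin s).1
  refine (h.mono_set (Ioi_subset_Ioi zero_le_one)).congr_fun (fun x hx ↦ ?_) measurableSet_Ioi
  simp only [← hurwitzEvenFEPair_f_modif_of_one_lt hx]
  rfl

lemma mellinConvergent_truncThetaTail (s : ℂ) : MellinConvergent truncThetaTail s := by
  rw [MellinConvergent, cpow_smul_truncThetaTail]
  exact ((integrable_indicator_iff measurableSet_Ioi).mpr
    (integrableOn_cpow_smul_thetaTail s)).integrableOn

lemma mellin_truncThetaTail (s : ℂ) : mellin truncThetaTail s =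
    ∫ x in Ioi (1 : ℝ), (x : ℂ) ^ (s - 1) • (thetaTail x : ℂ) := by
  rw [mellin, cpow_smul_truncThetaTail, setIntegral_indicator measurableSet_Ioi,
    Ioi_inter_Ioi, max_eq_right zero_le_one]

lemma image_exp_mul_Ioi_zero {a : ℝ} (ha : 0 < a) :
    (fun u : ℝ ↦ Real.exp (a * u)) '' Ioi 0 = Ioi 1 := by
  ext x
  simp only [mem_image, mem_Ioi]
  constructor
  · rintro ⟨u, hu, rfl⟩
    exact Real.one_lt_exp_iff.mpr (mul_pos ha hu)
  · intro hx
    refine ⟨Real.log x / a, div_pos (Real.log_pos hx) ha, ?_⟩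
    rw [mul_div_cancel₀ _ ha.ne', Real.exp_log (zero_lt_one.trans hx)]

lemma hasDerivAt_exp_mul (a x : ℝ) :
    HasDerivAt (fun u : ℝ ↦ Real.exp (a * u)) (Real.exp (a * x) * a) x := by
  simpa using ((hasDerivAt_id x).const_mul a).exp

lemma injOn_exp_mul {a : ℝ} (ha : a ≠ 0) (s : Set ℝ) :
    InjOn (fun u : ℝ ↦ Real.exp (a * u)) s :=
  (Real.exp_injective.comp (mul_right_injective₀ ha)).injOn

lemma smul_cpow_smul_thetaTail_exp (z : ℂ) (u : ℝ) :
    |Real.exp (2 * u) * 2| •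
      ((Real.exp (2 * u) : ℂ) ^ (1 / 4 + z / 2 - 1) • (thetaTail (Real.exp (2 * u)) : ℂ)) =
    2 * (xiKernel u * cexp (z * u)) := by
  have exponents : cexp (2 * u) * cexp (2 * u * (1 / 4 + z / 2 - 1)) =
      cexp (u / 2) * cexp (z * u) := by
    rw [← Complex.exp_add, ← Complex.exp_add]
    ring_nf
  rw [abs_of_pos (by positivity), xiKernel,
    cpow_def_of_ne_zero (ofReal_ne_zero.mpr (Real.exp_pos _).ne'),
    ← ofReal_log (Real.exp_pos _).le, Real.log_exp]
  simp only [real_smul, smul_eq_mul]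
  push_cast
  linear_combination 2 * (thetaTail (Real.exp (2 * u)) : ℂ) * exponents

lemma integrableOn_xiKernel_mul_cexp (z : ℂ) :
    IntegrableOn (fun u : ℝ ↦ (xiKernel u : ℂ) * cexp (z * u)) (Ioi 0) := by
  have h := integrableOn_cpow_smul_thetaTail (1 / 4 + z / 2)
  rw [← image_exp_mul_Ioi_zero two_pos, integrableOn_image_iff_integrableOn_abs_deriv_smul
    measurableSet_Ioi (fun x _ ↦ (hasDerivAt_exp_mul 2 x).hasDerivWithinAt)
    (injOn_exp_mul two_ne_zero _)] at h
  simp_rw [smul_cpow_smul_thetaTail_exp z] at h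
  simpa [IntegrableOn] using h.const_mul (1 / 2 : ℂ)

lemma mellin_truncThetaTail_eq_laplace (z : ℂ) : mellin truncThetaTail (1 / 4 + z / 2) =
    2 * ∫ u in Ioi (0 : ℝ), (xiKernel u : ℂ) * cexp (z * u) := by
  rw [mellin_truncThetaTail, ← image_exp_mul_Ioi_zero two_pos,
    integral_image_eq_integral_abs_deriv_smul measurableSet_Ioi
      (fun x _ ↦ (hasDerivAt_exp_mul 2 x).hasDerivWithinAt) (injOn_exp_mul two_ne_zero _)]
  simp_rw [smul_cpow_smul_thetaTail_exp z]
  exact integral_const_mul _ _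

lemma completedRiemannZeta₀_eq_mellin (z : ℂ) : completedRiemannZeta₀ (1 / 2 + z) =
    (mellin truncThetaTail (1 / 4 + z / 2) + mellin truncThetaTail (1 / 4 + -z / 2)) / 2 := by
  have reflected_mellin :
      mellin (fun x : ℝ ↦ (x : ℂ) ^ (-(1 / 2) : ℂ) • truncThetaTail x⁻¹) ((1 / 2 + z) / 2) =
        mellin truncThetaTail (1 / 4 + -z / 2) := by
    rw [mellin_cpow_smul, mellin_comp_inv]
    ring_nf
  have reflected_convergent : MellinConvergent
      (fun x : ℝ ↦ (x : ℂ) ^ (-(1 / 2) : ℂ) • truncThetaTail x⁻¹) ((1 / 2 + z) / 2) := by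
    rw [MellinConvergent.cpow_smul]
    simpa [Real.rpow_neg_one] using
      (MellinConvergent.comp_rpow (s := (1 / 2 + z) / 2 + -(1 / 2)) (a := -1) (by norm_num)).mpr
        (mellinConvergent_truncThetaTail _)
  have f_modif_mellin :
      mellin (HurwitzZeta.hurwitzEvenFEPair 0).f_modif ((1 / 2 + z) / 2) =
      mellin (fun x ↦ truncThetaTail x + (x : ℂ) ^ (-(1 / 2) : ℂ) • truncThetaTail x⁻¹)
        ((1 / 2 + z) / 2) :=
    setIntegral_congr_fun measurableSet_Ioi fun x hx ↦ by
      simp only [hurwitzEvenFEPair_f_modif_eq hx]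
  rw [completedRiemannZeta₀, HurwitzZeta.completedHurwitzZetaEven₀, WeakFEPair.Λ₀, f_modif_mellin,
    (hasMellin_add (mellinConvergent_truncThetaTail _) reflected_convergent).2, reflected_mellin]
  ring_nf

theorem completedRiemannZeta₀_eq_integral (z : ℂ) : completedRiemannZeta₀ (1 / 2 + z) =
    ∫ u in Ioi (0 : ℝ), (xiKernel u : ℂ) * (cexp (z * u) + cexp (-(z * u))) := by
  have integrable_neg := integrableOn_xiKernel_mul_cexp (-z)
  rw [completedRiemannZeta₀_eq_mellin, mellin_truncThetaTail_eq_laplace,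
    mellin_truncThetaTail_eq_laplace]
  simp_rw [neg_mul] at integrable_neg ⊢
  simp_rw [mul_add]
  rw [integral_add (integrableOn_xiKernel_mul_cexp z) integrable_neg]
  ring

lemma completedRiemannZeta₀_conj (s : ℂ) :
    completedRiemannZeta₀ (conj s) = conj (completedRiemannZeta₀ s) := by
  obtain ⟨z, rfl⟩ : ∃ z, s = 1 / 2 + z := ⟨s - 1 / 2, by ring⟩
  have conj_half : conj (1 / 2 + z) = 1 / 2 + conj z := by
    rw [map_add, map_div₀, map_one, map_ofNat]
  rw [conj_half, completedRiemannZeta₀_eq_integral, completedRiemannZeta₀_eq_integral,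
    ← integral_conj]
  congr with u
  simp [← Complex.exp_conj]

lemma norm_cexp_add_cexp_neg_le {σ u : ℝ} {z : ℂ} (hz : |z.re| ≤ σ) (hu : 0 ≤ u) :
    ‖cexp (z * u) + cexp (-(z * u))‖ ≤ 2 * Real.exp (σ * u) := by
  obtain ⟨hlower, hupper⟩ := abs_le.mp hz
  refine (norm_add_le _ _).trans ?_
  rw [Complex.norm_exp, Complex.norm_exp, neg_re, re_mul_ofReal, ← neg_mul, two_mul]
  gcongr
  linarith

lemma norm_xiKernel_mul_cexp_add_cexp_neg_le {σ u : ℝ} {z : ℂ} (hz : |z.re| ≤ σ) (hu : 0 ≤ u) :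
    ‖(xiKernel u : ℂ) * (cexp (z * u) + cexp (-(z * u)))‖ ≤
      xiKernel u * (2 * Real.exp (σ * u)) := by
  rw [norm_mul, norm_real, Real.norm_of_nonneg (xiKernel_nonneg u)]
  exact mul_le_mul_of_nonneg_left (norm_cexp_add_cexp_neg_le hz hu) (xiKernel_nonneg u)

lemma integrableOn_xiKernel_mul_exp (σ : ℝ) :
    IntegrableOn (fun u ↦ xiKernel u * Real.exp (σ * u)) (Ioi 0) := by
  refine IntegrableOn.congr_fun (integrableOn_xiKernel_mul_cexp σ).norm (fun u _ ↦ ?_)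
    measurableSet_Ioi
  simp [Complex.norm_exp, abs_of_nonneg (xiKernel_nonneg u)]

lemma exists_norm_completedRiemannZeta₀_le (σ : ℝ) :
    ∃ M, 0 ≤ M ∧ ∀ s : ℂ, |s.re - 1 / 2| ≤ σ → ‖completedRiemannZeta₀ s‖ ≤ M := by
  refine ⟨∫ u in Ioi (0 : ℝ), xiKernel u * (2 * Real.exp (σ * u)),
    integral_nonneg fun u ↦ mul_nonneg (xiKernel_nonneg u) (by positivity), fun s hs ↦ ?_⟩
  obtain ⟨z, rfl⟩ : ∃ z, s = 1 / 2 + z := ⟨s - 1 / 2, by ring⟩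
  rw [completedRiemannZeta₀_eq_integral]
  refine norm_integral_le_of_norm_le ?_ ?_
  · simpa only [mul_left_comm] using (integrableOn_xiKernel_mul_exp σ).const_mul 2
  · filter_upwards [ae_restrict_mem measurableSet_Ioi] with u hu
    exact norm_xiKernel_mul_cexp_add_cexp_neg_le (by simpa using hs) (mem_Ioi.mp hu).le

/-! ### Bounds for the zeta and Gamma functions -/

lemma norm_LSeries_le_tsum_one_div_rpow {f : ℕ → ℂ} (hf : ∀ n, ‖f n‖ ≤ 1) {σ : ℝ} (hσ : 1 < σ)
    {s : ℂ} (hs : σ ≤ s.re) : ‖LSeries f s‖ ≤ ∑' n : ℕ, 1 / (n : ℝ) ^ σ := by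
  refine tsum_of_norm_bounded (Real.summable_one_div_nat_rpow.mpr hσ).hasSum fun n ↦ ?_
  rw [LSeries.norm_term_eq]
  split_ifs with hn
  · positivity
  · have one_le : (1 : ℝ) ≤ n := by exact_mod_cast Nat.one_le_iff_ne_zero.mpr hn
    gcongr
    exact hf n

lemma norm_riemannZeta_le {σ : ℝ} (hσ : 1 < σ) {s : ℂ} (hs : σ ≤ s.re) :
    ‖riemannZeta s‖ ≤ ∑' n : ℕ, 1 / (n : ℝ) ^ σ := by
  rw [← ArithmeticFunction.LSeries_zeta_eq_riemannZeta (hσ.trans_le hs)]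
  refine norm_LSeries_le_tsum_one_div_rpow (fun n ↦ ?_) hσ hs
  by_cases hn : n = 0 <;> simp [ArithmeticFunction.zeta_apply, hn]

lemma one_le_mul_norm_riemannZeta {σ : ℝ} (hσ : 1 < σ) {s : ℂ} (hs : σ ≤ s.re) :
    1 ≤ (∑' n : ℕ, 1 / (n : ℝ) ^ σ) * ‖riemannZeta s‖ := by
  have inverse := ArithmeticFunction.LSeries_zeta_mul_Lseries_moebius (hσ.trans_le hs)
  have moebius_le := norm_LSeries_le_tsum_one_div_rpow
    (f := fun n ↦ (ArithmeticFunction.moebius n : ℂ))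
    (fun n ↦ by
      rw [Complex.norm_intCast]
      exact_mod_cast ArithmeticFunction.abs_moebius_le_one) hσ hs
  rw [ArithmeticFunction.LSeries_zeta_eq_riemannZeta (hσ.trans_le hs), mul_comm] at inverse
  calc (1 : ℝ) = ‖LSeries (fun n ↦ (ArithmeticFunction.moebius n : ℂ)) s‖ * ‖riemannZeta s‖ := by
        rw [← norm_mul, inverse, norm_one]
    _ ≤ _ := by gcongr

lemma norm_Gamma_le_Gamma_re {s : ℂ} (hs : 0 < s.re) : ‖Gamma s‖ ≤ Real.Gamma s.re := by
  rw [Complex.Gamma_eq_integral hs, Real.Gamma_eq_integral hs, GammaIntegral]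
  refine norm_integral_le_of_norm_le (Real.GammaIntegral_convergent hs) ?_
  filter_upwards [ae_restrict_mem measurableSet_Ioi] with x hx
  simp [norm_cpow_eq_rpow_re_of_pos hx, Complex.norm_exp]

lemma exists_norm_Gamma_le {a : ℝ} (ha : 0 < a) (b : ℝ) :
    ∃ M, 0 ≤ M ∧ ∀ s : ℂ, a ≤ s.re → s.re ≤ b → ‖Gamma s‖ ≤ M := by
  have continuousOn_Gamma : ContinuousOn Real.Gamma (Icc a b) := fun x hx ↦
    (Real.differentiableAt_Gamma fun m h ↦ by
      linarith [hx.1, m.cast_nonneg (α := ℝ)]).continuousAt.continuousWithinAt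
  obtain ⟨M, hM⟩ := isCompact_Icc.exists_bound_of_continuousOn continuousOn_Gamma
  refine ⟨max M 0, le_max_right _ _, fun s has hsb ↦ ?_⟩
  calc ‖Gamma s‖ ≤ Real.Gamma s.re := norm_Gamma_le_Gamma_re (ha.trans_le has)
    _ ≤ M := (le_abs_self _).trans (hM _ ⟨has, hsb⟩)
    _ ≤ max M 0 := le_max_left _ _

lemma norm_sin_le_exp_abs_im (z : ℂ) : ‖sin z‖ ≤ Real.exp |z.im| := by
  have first : ‖cexp (-z * I)‖ ≤ Real.exp |z.im| := by
    simpa [Complex.norm_exp] using le_abs_self z.im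
  have second : ‖cexp (z * I)‖ ≤ Real.exp |z.im| := by
    simpa [Complex.norm_exp] using neg_le_abs z.im
  rw [sin, norm_div, norm_mul, norm_I, mul_one, Complex.norm_ofNat, div_le_iff₀ two_pos]
  linarith [norm_sub_le (cexp (-z * I)) (cexp (z * I))]

lemma ne_ofReal_of_one_le_abs_im {w : ℂ} (hw : 1 ≤ |w.im|) (x : ℝ) : w ≠ x := by
  rintro rfl
  norm_num at hw

lemma exists_norm_Gamma_one_sub_le (a : ℝ) {b : ℝ} (hb : b < 2) :
    ∃ M, 0 ≤ M ∧ ∀ w : ℂ, a ≤ w.re → w.re ≤ b → 1 ≤ |w.im| → ‖Gamma (1 - w)‖ ≤ M := by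
  obtain ⟨M, hM0, hM⟩ := exists_norm_Gamma_le (sub_pos.mpr hb) (2 - a)
  refine ⟨M, hM0, fun w haw hwb him ↦ ?_⟩
  have ne_zero : 1 - w ≠ 0 :=
    sub_ne_zero.mpr (by simpa using (ne_ofReal_of_one_le_abs_im him 1).symm)
  have one_le_norm : 1 ≤ ‖1 - w‖ := him.trans (by simpa using abs_im_le_norm (1 - w))
  calc ‖Gamma (1 - w)‖ ≤ ‖1 - w‖ * ‖Gamma (1 - w)‖ := le_mul_of_one_le_left (norm_nonneg _)
        one_le_norm
    _ = ‖Gamma (1 - w + 1)‖ := by rw [Gamma_add_one _ ne_zero, norm_mul]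
    _ ≤ M := hM _ (by simp; linarith) (by simp; linarith)

-- Euler's reflection formula turns the upper bound for `Γ(1 - w)` into a lower bound for `Γ(w)`.
lemma exists_one_le_mul_norm_Gamma (a : ℝ) {b : ℝ} (hb : b < 2) :
    ∃ M, 0 ≤ M ∧ ∀ w : ℂ, a ≤ w.re → w.re ≤ b → 1 ≤ |w.im| →
      1 ≤ M * Real.exp (Real.pi * |w.im|) * ‖Gamma w‖ := by
  obtain ⟨M, hM0, hM⟩ := exists_norm_Gamma_one_sub_le a hb
  refine ⟨M, hM0, fun w haw hwb him ↦ ?_⟩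
  have sin_ne_zero : sin (Real.pi * w) ≠ 0 := by
    rw [Complex.sin_ne_zero_iff]
    intro k hk
    refine ne_ofReal_of_one_le_abs_im him k (mul_left_cancel₀
      (ofReal_ne_zero.mpr Real.pi_ne_zero) ?_)
    rw [hk, ofReal_intCast, mul_comm]
  have reflection : ‖Gamma w‖ * ‖Gamma (1 - w)‖ * ‖sin (Real.pi * w)‖ = Real.pi := by
    rw [← norm_mul, ← norm_mul, Complex.Gamma_mul_Gamma_one_sub, div_mul_cancel₀ _ sin_ne_zero,
      norm_real, Real.norm_of_nonneg Real.pi_nonneg]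
  have sin_le : ‖sin (Real.pi * w)‖ ≤ Real.exp (Real.pi * |w.im|) := by
    simpa [abs_mul, abs_of_pos Real.pi_pos] using norm_sin_le_exp_abs_im (Real.pi * w)
  calc (1 : ℝ) ≤ ‖Gamma w‖ * ‖Gamma (1 - w)‖ * ‖sin (Real.pi * w)‖ := by
        rw [reflection]
        linarith [Real.pi_gt_three]
    _ ≤ ‖Gamma w‖ * M * Real.exp (Real.pi * |w.im|) := by
        gcongr
        exact hM w haw hwb him
    _ = M * Real.exp (Real.pi * |w.im|) * ‖Gamma w‖ := by ring

lemma norm_betaIntegral_le {a : ℝ} (ha : 0 < a) {u : ℂ} (hu : 1 ≤ u.re) :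
    ‖betaIntegral u a‖ ≤ ∫ x in (0 : ℝ)..1, (1 - x) ^ (a - 1) := by
  have integrable : IntervalIntegrable (fun x : ℝ ↦ (1 - x) ^ (a - 1)) volume 0 1 := by
    simpa using ((intervalIntegral.intervalIntegrable_rpow' (a := 0) (b := 1) (r := a - 1)
      (by linarith)).comp_sub_left 1).symm
  refine intervalIntegral.norm_integral_le_of_norm_le zero_le_one ?_ integrable
  filter_upwards [compl_mem_ae_iff.mpr (measure_singleton (1 : ℝ))] with x hx1 hx
  have pos : 0 < x := hx.1
  have lt_one : x < 1 := lt_of_le_of_ne hx.2 hx1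
  have rpow_le_one : x ^ (u - 1).re ≤ 1 :=
    Real.rpow_le_one pos.le lt_one.le (by simpa using hu)
  rw [norm_mul, norm_cpow_eq_rpow_re_of_pos pos, ← ofReal_one, ← ofReal_sub,
    norm_cpow_eq_rpow_re_of_pos (sub_pos.mpr lt_one)]
  simpa using mul_le_mul_of_nonneg_right rpow_le_one
    (Real.rpow_nonneg (sub_pos.mpr lt_one).le (a - 1))

lemma exists_norm_Gamma_le_mul_norm_Gamma_add {a : ℝ} (ha : 0 < a) :
    ∃ M, 0 ≤ M ∧ ∀ u : ℂ, 1 ≤ u.re → ‖Gamma u‖ ≤ M * ‖Gamma (u + a)‖ := by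
  have Gamma_pos : 0 < Real.Gamma a := Real.Gamma_pos_of_pos ha
  refine ⟨(∫ x in (0 : ℝ)..1, (1 - x) ^ (a - 1)) / Real.Gamma a, ?_, fun u hu ↦ ?_⟩
  · refine div_nonneg (intervalIntegral.integral_nonneg zero_le_one fun x hx ↦ ?_) Gamma_pos.le
    exact Real.rpow_nonneg (sub_nonneg.mpr hx.2) _
  · have beta_eq : ‖Gamma u‖ * Real.Gamma a = ‖Gamma (u + a)‖ * ‖betaIntegral u a‖ := by
      rw [← norm_mul, ← Complex.Gamma_mul_Gamma_eq_betaIntegral (by linarith) (by simpa), norm_mul,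
        Complex.Gamma_ofReal, norm_real, Real.norm_of_nonneg Gamma_pos.le]
    rw [div_mul_eq_mul_div, le_div_iff₀ Gamma_pos, beta_eq, mul_comm]
    gcongr
    exact norm_betaIntegral_le ha hu

lemma norm_Gammaℝ (s : ℂ) :
    ‖Gammaℝ s‖ = Real.pi ^ (-s.re / 2) * ‖Gamma (s / 2)‖ := by
  rw [Gammaℝ_def, norm_mul, norm_cpow_eq_rpow_re_of_pos Real.pi_pos, div_ofNat_re, neg_re]

/-! ### The function `χ` -/

lemma differentiable_chi : Differentiable ℂ chi := by
  unfold chi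
  have := differentiable_completedZeta₀
  fun_prop

lemma chi_one_sub (s : ℂ) : chi (1 - s) = chi s := by
  rw [chi, chi, completedRiemannZeta₀_one_sub]
  ring

lemma chi_conj (s : ℂ) : chi (conj s) = conj (chi s) := by
  simp [chi, completedRiemannZeta₀_conj]

lemma chi_eq_mul_Gammaℝ_mul_riemannZeta {s : ℂ} (h0 : 0 < s.re) (h1 : s ≠ 1) :
    chi s = s * (s - 1) * (Gammaℝ s * riemannZeta s) := by
  have ne_zero : s ≠ 0 := ne_zero_of_re_pos h0
  have one_sub_ne_zero : 1 - s ≠ 0 := sub_ne_zero.mpr h1.symm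
  rw [riemannZeta_def_of_ne_zero ne_zero, mul_div_cancel₀ _ (Gammaℝ_ne_zero_of_re_pos h0),
    completedRiemannZeta_eq, chi]
  field_simp
  ring

lemma chi_ne_zero_of_one_le_re {s : ℂ} (hs : 1 ≤ s.re) : chi s ≠ 0 := by
  have re_pos : 0 < s.re := zero_lt_one.trans_le hs
  rcases eq_or_ne s 1 with rfl | h1
  · simp [chi]
  · rw [chi_eq_mul_Gammaℝ_mul_riemannZeta re_pos h1]
    exact mul_ne_zero (mul_ne_zero (ne_zero_of_re_pos re_pos) (sub_ne_zero.mpr h1))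
      (mul_ne_zero (Gammaℝ_ne_zero_of_re_pos re_pos) (riemannZeta_ne_zero_of_one_le_re hs))

lemma norm_chi {s : ℂ} (hs : 1 < s.re) : ‖chi s‖ =
    ‖s‖ * ‖s - 1‖ * (Real.pi ^ (-s.re / 2) * ‖Gamma (s / 2)‖ * ‖riemannZeta s‖) := by
  have ne_one : s ≠ 1 := by
    rintro rfl
    simp at hs
  rw [chi_eq_mul_Gammaℝ_mul_riemannZeta (zero_lt_one.trans hs) ne_one, norm_mul, norm_mul, norm_mul,
    norm_Gammaℝ]

lemma norm_le_norm_add_ofReal {s : ℂ} {x : ℝ} (hs : 0 ≤ s.re) (hx : 0 ≤ x) : ‖s‖ ≤ ‖s + x‖ := by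
  rw [Complex.norm_def, Complex.norm_def]
  refine Real.sqrt_le_sqrt ?_
  rw [normSq_apply, normSq_apply, add_re, add_im, ofReal_re, ofReal_im]
  nlinarith

/-! ### Growth of `χ` -/

lemma norm_chi_eq_norm_chi_add {δ : ℝ} {s : ℂ} (hs : s.re = (1 - δ) / 2) :
    ‖chi s‖ = ‖chi (s + δ)‖ := by
  have reflect : conj (1 - s) = s + δ := by
    apply Complex.ext <;> simp [hs]
    ring
  rw [← reflect, chi_conj, chi_one_sub, Complex.norm_conj]

lemma exists_norm_chi_le_mul_norm_chi_add {δ : ℝ} (hδ : 0 < δ) :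
    ∃ M, ∀ s : ℂ, 2 ≤ s.re → ‖chi s‖ ≤ M * ‖chi (s + δ)‖ := by
  obtain ⟨K, hK0, hK⟩ := exists_norm_Gamma_le_mul_norm_Gamma_add (half_pos hδ)
  set Z := ∑' n : ℕ, 1 / (n : ℝ) ^ (2 : ℝ)
  have Z_nonneg : 0 ≤ Z := tsum_nonneg fun n ↦ by positivity
  refine ⟨Real.pi ^ (δ / 2) * K * (Z * Z), fun s hs ↦ ?_⟩
  have re_add : (s + δ).re = s.re + δ := by simp
  have norm_le : ‖s‖ ≤ ‖s + δ‖ := norm_le_norm_add_ofReal (by linarith) hδ.le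
  have norm_sub_one_le : ‖s - 1‖ ≤ ‖s + δ - 1‖ := by
    rw [add_sub_right_comm]
    exact norm_le_norm_add_ofReal (by simp; linarith) hδ.le
  have Gamma_le : ‖Gamma (s / 2)‖ ≤ K * ‖Gamma ((s + δ) / 2)‖ := by
    simpa [add_div] using hK (s / 2) (by simpa using (one_le_div two_pos).mpr hs)
  have zeta_le : ‖riemannZeta s‖ ≤ Z * (Z * ‖riemannZeta (s + δ)‖) :=
    (norm_riemannZeta_le one_lt_two hs).trans (le_mul_of_one_le_right Z_nonneg
      (one_le_mul_norm_riemannZeta one_lt_two (by linarith)))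
  have pi_rpow : Real.pi ^ (-s.re / 2) = Real.pi ^ (δ / 2) * Real.pi ^ (-(s + δ).re / 2) := by
    rw [← Real.rpow_add Real.pi_pos, re_add]
    ring_nf
  rw [norm_chi (by linarith), norm_chi (by linarith), pi_rpow]
  calc _ ≤ ‖s + δ‖ * ‖s + δ - 1‖ * (Real.pi ^ (δ / 2) * Real.pi ^ (-(s + δ).re / 2) *
        (K * ‖Gamma ((s + δ) / 2)‖) * (Z * (Z * ‖riemannZeta (s + δ)‖))) := by gcongr
    _ = _ := by ring

lemma exists_norm_chi_le_mul_exp (σ : ℝ) :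
    ∃ C, 0 ≤ C ∧ ∀ s : ℂ, |s.re - 1 / 2| ≤ σ → ‖chi s‖ ≤ C * Real.exp |s.im| := by
  obtain ⟨M, hM0, hM⟩ := exists_norm_completedRiemannZeta₀_le σ
  refine ⟨2 * (σ + 2) ^ 2 * M + 1, by positivity, fun s hs ↦ ?_⟩
  have σ_nonneg : 0 ≤ σ := (abs_nonneg _).trans hs
  obtain ⟨hlower, hupper⟩ := abs_le.mp hs
  set t := |s.im| with ht
  have t_nonneg : 0 ≤ t := abs_nonneg _
  have norm_le : ‖s‖ ≤ t + (σ + 1) :=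
    (norm_le_abs_re_add_abs_im s).trans
      (by linarith [abs_le.mpr (⟨by linarith, by linarith⟩ : -(σ + 1) ≤ s.re ∧ s.re ≤ σ + 1)])
  have norm_sub_one_le : ‖s - 1‖ ≤ t + (σ + 1) := by
    refine (norm_le_abs_re_add_abs_im (s - 1)).trans ?_
    simp only [sub_re, sub_im, one_re, one_im, sub_zero, ← ht]
    linarith [abs_le.mpr
      (⟨by linarith, by linarith⟩ : -(σ + 1) ≤ s.re - 1 ∧ s.re - 1 ≤ σ + 1)]
  have square_le : (t + (σ + 1)) * (t + (σ + 1)) ≤ 2 * (σ + 2) ^ 2 * Real.exp t := by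
    have := Real.quadratic_le_exp_of_nonneg t_nonneg
    calc (t + (σ + 1)) * (t + (σ + 1)) ≤ ((σ + 2) * (1 + t)) * ((σ + 2) * (1 + t)) := by
          gcongr <;> nlinarith
      _ ≤ 2 * (σ + 2) ^ 2 * (1 + t + t ^ 2 / 2) := by nlinarith [sq_nonneg (σ + 2)]
      _ ≤ 2 * (σ + 2) ^ 2 * Real.exp t := by gcongr
  calc ‖chi s‖ ≤ ‖s‖ * ‖s - 1‖ * ‖completedRiemannZeta₀ s‖ + 1 := by
        simpa [chi] using norm_add_le (s * (s - 1) * completedRiemannZeta₀ s) 1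
    _ ≤ (t + (σ + 1)) * (t + (σ + 1)) * M + 1 := by
        gcongr
        exact hM s hs
    _ ≤ 2 * (σ + 2) ^ 2 * Real.exp t * M + Real.exp t := by
        gcongr
        exact Real.one_le_exp t_nonneg
    _ = (2 * (σ + 2) ^ 2 * M + 1) * Real.exp t := by ring

lemma exists_one_le_mul_exp_mul_norm_chi {σ τ : ℝ} (hσ : 1 < σ) (hτ : τ < 4) :
    ∃ C, 0 ≤ C ∧ ∀ s : ℂ, σ ≤ s.re → s.re ≤ τ → 2 ≤ |s.im| →
      1 ≤ C * Real.exp (Real.pi * |s.im|) * ‖chi s‖ := by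
  obtain ⟨K, hK0, hK⟩ := exists_one_le_mul_norm_Gamma (1 / 2) (b := τ / 2) (by linarith)
  set Z := ∑' n : ℕ, 1 / (n : ℝ) ^ σ
  have Z_nonneg : 0 ≤ Z := tsum_nonneg fun n ↦ by positivity
  refine ⟨Real.pi ^ (2 : ℝ) * K * Z, mul_nonneg (by positivity) Z_nonneg, fun s hσs hsτ him ↦ ?_⟩
  have one_le_norm : 1 ≤ ‖s‖ := by linarith [abs_im_le_norm s]
  have one_le_norm_sub_one : 1 ≤ ‖s - 1‖ := by
    have := abs_im_le_norm (s - 1)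
    simp only [sub_im, one_im, sub_zero] at this
    linarith
  have half_re : (s / 2).re = s.re / 2 := div_ofNat_re s 2
  have half_im : |(s / 2).im| = |s.im| / 2 := by simp [abs_div]
  have Gamma_ge : 1 ≤ K * Real.exp (Real.pi * |s.im|) * ‖Gamma (s / 2)‖ := by
    refine (hK (s / 2) (by linarith) (by linarith) (by linarith)).trans ?_
    rw [half_im]
    gcongr
    linarith
  have pi_ge : 1 ≤ Real.pi ^ (2 : ℝ) * Real.pi ^ (-s.re / 2) := by
    rw [← Real.rpow_add Real.pi_pos]
    exact Real.one_le_rpow (by linarith [Real.pi_gt_three]) (by linarith)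
  rw [norm_chi (by linarith)]
  calc (1 : ℝ) = 1 * 1 * (1 * 1 * 1) := by norm_num
    _ ≤ ‖s‖ * ‖s - 1‖ * ((Real.pi ^ (2 : ℝ) * Real.pi ^ (-s.re / 2)) *
        (K * Real.exp (Real.pi * |s.im|) * ‖Gamma (s / 2)‖) * (Z * ‖riemannZeta s‖)) := by
        gcongr
        exact one_le_mul_norm_riemannZeta hσ hσs
    _ = _ := by ring

/-! ### Phragmén–Lindelöf principles in a half-plane -/

lemma norm_le_of_bounded_on_half_plane {E : Type*} [NormedAddCommGroup E] [NormedSpace ℂ E]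
    {f : ℂ → E} {a B C : ℝ}
    (hd : ∀ s : ℂ, a ≤ s.re → DifferentiableAt ℂ f s) (hB : ∀ s : ℂ, a ≤ s.re → ‖f s‖ ≤ B)
    (hC : ∀ s : ℂ, s.re = a → ‖f s‖ ≤ C) {s : ℂ} (hs : a ≤ s.re) : ‖f s‖ ≤ C := by
  suffices ‖f (s - a + a)‖ ≤ C by rwa [sub_add_cancel] at this
  refine PhragmenLindelof.right_half_plane_of_bounded_on_real (f := fun z ↦ f (z + a))
    ?_ ⟨1, by norm_num, 0, ?_⟩ ⟨B, ?_⟩ (fun t ↦ hC _ (by simp)) (by simpa using hs)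
  · refine DifferentiableOn.diffContOnCl fun z hz ↦ ?_
    rw [Complex.closure_setOfPred_lt_re] at hz
    have hz' : 0 ≤ z.re := hz
    exact ((hd (z + a) (by simpa using hz')).comp z (by fun_prop)).differentiableWithinAt
  · refine Asymptotics.IsBigO.of_bound B (eventually_inf_principal.mpr (.of_forall fun z hz ↦ ?_))
    have hz' : 0 < z.re := hz
    simpa using hB (z + a) (by simpa using hz'.le)
  · refine eventually_map.mpr ((eventually_ge_atTop 0).mono fun x hx ↦ ?_)
    exact hB _ (by simpa using hx)

-- The maximum principle for `exp (-F)`; strictness at interior points follows since `exp (-F)`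
-- would otherwise be constant up to the boundary line.
theorem re_pos_of_re_pos_on_line {F : ℂ → ℂ} {a B : ℝ}
    (hd : ∀ s : ℂ, a ≤ s.re → DifferentiableAt ℂ F s) (hB : ∀ s : ℂ, a ≤ s.re → ‖F s‖ ≤ B)
    (hpos : ∀ s : ℂ, s.re = a → 0 < (F s).re) {s : ℂ} (hs : a ≤ s.re) : 0 < (F s).re := by
  have norm_exp_neg_le {z : ℂ} (hz : a ≤ z.re) : ‖cexp (-F z)‖ ≤ 1 := by
    refine norm_le_of_bounded_on_half_plane (f := fun z ↦ cexp (-F z)) (B := Real.exp B)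
      (fun w hw ↦ (hd w hw).neg.cexp) (fun w hw ↦ ?_) (fun w hw ↦ ?_) hz
    · rw [norm_exp, Real.exp_le_exp, neg_re]
      linarith [abs_le.mp ((abs_re_le_norm (F w)).trans (hB w hw))]
    · rw [norm_exp, Real.exp_le_one_iff, neg_re]
      linarith [hpos w hw]
  rcases hs.eq_or_lt with hs' | hs'
  · exact hpos s hs'.symm
  by_contra! hF
  have isMaxOn_exp_neg : IsMaxOn (norm ∘ fun z ↦ cexp (-F z)) {z | a < z.re} s := by
    intro z hz
    refine (norm_exp_neg_le (le_of_lt hz)).trans ?_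
    rw [Function.comp_apply, norm_exp, neg_re]
    exact Real.one_le_exp (by linarith)
  have diffContOnCl_exp_neg : DiffContOnCl ℂ (fun z ↦ cexp (-F z)) {z | a < z.re} := by
    refine DifferentiableOn.diffContOnCl fun z hz ↦ ?_
    rw [closure_setOfPred_lt_re] at hz
    exact (hd z hz).neg.cexp.differentiableWithinAt
  have norm_eq : ‖cexp (-F a)‖ = ‖cexp (-F s)‖ :=
    norm_eqOn_closure_of_isPreconnected_of_isMaxOn (convex_halfSpace_re_gt a).isPreconnected
      (isOpen_lt continuous_const continuous_re) diffContOnCl_exp_neg hs' isMaxOn_exp_neg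
      (by rw [closure_setOfPred_lt_re]; exact (ofReal_re a).ge)
  rw [norm_exp, norm_exp, Real.exp_eq_exp, neg_re, neg_re] at norm_eq
  linarith [hpos a (ofReal_re a)]

/-! ### Monotonicity of `‖χ‖` under unit shifts -/

section ShiftRatio

variable {δ : ℝ}

lemma chi_add_ne_zero (hδ : 1 ≤ δ) {s : ℂ} (hs : (1 - δ) / 2 ≤ s.re) : chi (s + δ) ≠ 0 :=
  chi_ne_zero_of_one_le_re (by rw [add_re, ofReal_re]; linarith)

lemma differentiableAt_chi_div_chi_add (hδ : 1 ≤ δ) {s : ℂ} (hs : (1 - δ) / 2 ≤ s.re) :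
    DifferentiableAt ℂ (fun z ↦ chi z / chi (z + δ)) s :=
  (differentiable_chi s).div ((differentiable_chi _).comp s (by fun_prop))
    (chi_add_ne_zero hδ hs)

lemma norm_chi_div_chi_add_le_iff (hδ : 1 ≤ δ) {s : ℂ} (hs : (1 - δ) / 2 ≤ s.re) {C : ℝ} :
    ‖chi s / chi (s + δ)‖ ≤ C ↔ ‖chi s‖ ≤ C * ‖chi (s + δ)‖ := by
  rw [norm_div, div_le_iff₀ (norm_pos_iff.mpr (chi_add_ne_zero hδ hs))]

lemma norm_chi_div_chi_add_of_re_eq (hδ : 1 ≤ δ) {s : ℂ} (hs : s.re = (1 - δ) / 2) :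
    ‖chi s / chi (s + δ)‖ ≤ 1 := by
  rw [norm_chi_div_chi_add_le_iff hδ hs.ge, one_mul, norm_chi_eq_norm_chi_add hs]

lemma isBigO_chi_div_chi_add (hδ : 1 < δ) (hδ' : δ < 2) :
    (fun s ↦ chi s / chi (s + δ)) =O[comap (_root_.abs ∘ im) atTop ⊓
        𝓟 (re ⁻¹' Ioo ((1 - δ) / 2) 2)]
      fun s ↦ Real.exp (5 * Real.exp (1 * |s.im|)) := by
  obtain ⟨C, hC0, hC⟩ := exists_norm_chi_le_mul_exp 2
  obtain ⟨K, hK0, hK⟩ := exists_one_le_mul_exp_mul_norm_chi (σ := (1 + δ) / 2) (τ := 2 + δ)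
    (by linarith) (by linarith)
  refine Asymptotics.IsBigO.of_bound (C * K) (eventually_inf_principal.mpr ?_)
  have large_im : ∀ᶠ s in comap (_root_.abs ∘ im) atTop, 2 ≤ |s.im| :=
    tendsto_comap.eventually (eventually_ge_atTop 2)
  filter_upwards [large_im] with s him hs
  obtain ⟨hleft, hright⟩ : (1 - δ) / 2 < s.re ∧ s.re < 2 := hs
  rw [norm_chi_div_chi_add_le_iff hδ.le hleft.le, Real.norm_of_nonneg (Real.exp_pos _).le]
  have upper : ‖chi s‖ ≤ C * Real.exp |s.im| :=
    hC s (abs_le.mpr ⟨by linarith, by linarith⟩)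
  have lower : 1 ≤ K * Real.exp (Real.pi * |s.im|) * ‖chi (s + δ)‖ := by
    simpa using hK (s + δ) (by simp; linarith) (by simp; linarith) (by simpa using him)
  have exponents : |s.im| + Real.pi * |s.im| ≤ 5 * Real.exp (1 * |s.im|) := by
    rw [one_mul]
    nlinarith [Real.add_one_le_exp |s.im|, Real.pi_lt_d2]
  calc ‖chi s‖ ≤ C * Real.exp |s.im| * 1 := by rwa [mul_one]
    _ ≤ C * Real.exp |s.im| * (K * Real.exp (Real.pi * |s.im|) * ‖chi (s + δ)‖) := by gcongr
    _ = C * K * Real.exp (|s.im| + Real.pi * |s.im|) * ‖chi (s + δ)‖ := by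
        rw [Real.exp_add]
        ring
    _ ≤ C * K * Real.exp (5 * Real.exp (1 * |s.im|)) * ‖chi (s + δ)‖ := by gcongr

lemma exists_norm_chi_div_chi_add_le (hδ : 1 < δ) (hδ' : δ < 2) :
    ∃ M, ∀ s : ℂ, (1 - δ) / 2 ≤ s.re → ‖chi s / chi (s + δ)‖ ≤ M := by
  obtain ⟨M, hM⟩ := exists_norm_chi_le_mul_norm_chi_add (zero_lt_one.trans hδ)
  have right_bound (s : ℂ) (hs : 2 ≤ s.re) : ‖chi s / chi (s + δ)‖ ≤ max 1 M :=
    ((norm_chi_div_chi_add_le_iff hδ.le (by linarith)).mpr (hM s hs)).trans (le_max_right _ _)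
  refine ⟨max 1 M, fun s hs ↦ ?_⟩
  rcases le_total 2 s.re with hs2 | hs2
  · exact right_bound s hs2
  refine PhragmenLindelof.vertical_strip (f := fun z ↦ chi z / chi (z + δ)) ?_
    ⟨1, ?_, 5, isBigO_chi_div_chi_add hδ hδ'⟩
    (fun z hz ↦ (norm_chi_div_chi_add_of_re_eq hδ.le hz).trans (le_max_left _ _))
    (fun z hz ↦ right_bound z hz.ge) hs hs2
  · refine DifferentiableOn.diffContOnCl fun z hz ↦ ?_
    have hz' : z ∈ re ⁻¹' Icc ((1 - δ) / 2) 2 :=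
      closure_minimal (preimage_mono Ioo_subset_Icc_self) (isClosed_Icc.preimage continuous_re) hz
    exact (differentiableAt_chi_div_chi_add hδ.le hz'.1).differentiableWithinAt
  · rw [lt_div_iff₀ (by linarith)]
    linarith [Real.pi_gt_three]

end ShiftRatio

-- For shifts `δ > 1` the point `s + δ` stays in a half-plane of absolute convergence, where `ζ` is
-- bounded away from zero.
theorem norm_chi_le_norm_chi_add_one {s : ℂ} (hs : 0 ≤ s.re) : ‖chi s‖ ≤ ‖chi (s + 1)‖ := by
  have limit : Tendsto (fun δ : ℝ ↦ ‖chi (s + δ)‖) (𝓝[>] 1) (𝓝 ‖chi (s + 1)‖) := by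
    have continuous_shift : Continuous fun δ : ℝ ↦ ‖chi (s + δ)‖ := by
      have := differentiable_chi.continuous
      fun_prop
    simpa using (continuous_shift.tendsto 1).mono_left nhdsWithin_le_nhds
  refine ge_of_tendsto limit ?_
  filter_upwards [Ioo_mem_nhdsGT one_lt_two] with δ ⟨hδ, hδ'⟩
  obtain ⟨M, hM⟩ := exists_norm_chi_div_chi_add_le hδ hδ'
  have ratio_le : ‖chi s / chi (s + δ)‖ ≤ 1 :=
    norm_le_of_bounded_on_half_plane (f := fun z ↦ chi z / chi (z + δ))
      (fun z hz ↦ differentiableAt_chi_div_chi_add hδ.le hz) hM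
      (fun z hz ↦ norm_chi_div_chi_add_of_re_eq hδ.le hz) (by linarith)
  simpa using (norm_chi_div_chi_add_le_iff hδ.le (by linarith)).mp ratio_le

/-! ### Factoring out zeros of entire functions -/

lemma exists_differentiable_eq_sub_mul {f : ℂ → ℂ} (hf : Differentiable ℂ f) {c : ℂ}
    (hc : f c = 0) : ∃ g : ℂ → ℂ, Differentiable ℂ g ∧ ∀ s, f s = (s - c) * g s := by
  refine ⟨dslope f c, differentiableOn_univ.mp ?_, fun s ↦ ?_⟩
  · exact (differentiableOn_dslope univ_mem).mpr hf.differentiableOn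
  · simpa [hc] using (sub_smul_dslope f c s).symm

lemma exists_differentiable_eq_sub_mul_sub_mul {f : ℂ → ℂ} (hf : Differentiable ℂ f) {c d : ℂ}
    (hcd : c ≠ d) (hc : f c = 0) (hd : f d = 0) :
    ∃ g : ℂ → ℂ, Differentiable ℂ g ∧ ∀ s, f s = (s - c) * (s - d) * g s := by
  obtain ⟨m, hm, hfm⟩ := exists_differentiable_eq_sub_mul hf hc
  have hmd : m d = 0 :=
    (mul_eq_zero.mp ((hfm d).symm.trans hd)).resolve_left (sub_ne_zero.mpr hcd.symm)
  obtain ⟨g, hg, hmg⟩ := exists_differentiable_eq_sub_mul hm hmd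
  exact ⟨g, hg, fun s ↦ by rw [hfm, hmg, mul_assoc]⟩

lemma deriv_prod_sub_mul_ne_zero {S : Finset ℂ} {k : ℂ → ℂ} {c : ℂ} (hc : c ∈ S)
    (hk : DifferentiableAt ℂ k c) (hkc : k c ≠ 0) :
    deriv (fun s ↦ (∏ d ∈ S, (s - d)) * k s) c ≠ 0 := by
  have isolate : (fun s ↦ (∏ d ∈ S, (s - d)) * k s) =
      fun s ↦ (s - c) * ((∏ d ∈ S.erase c, (s - d)) * k s) := by
    funext s
    rw [← mul_assoc, Finset.mul_prod_erase S (fun d ↦ s - d) hc]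
  have cofactor : DifferentiableAt ℂ (fun s ↦ (∏ d ∈ S.erase c, (s - d)) * k s) c := by fun_prop
  rw [isolate, deriv_fun_mul (by fun_prop) cofactor, sub_self, zero_mul, add_zero, deriv_sub_const,
    deriv_id'', one_mul]
  refine mul_ne_zero (Finset.prod_ne_zero_iff.mpr fun d hd ↦ sub_ne_zero.mpr ?_) hkc
  exact (Finset.ne_of_mem_erase hd).symm

lemma exists_forall_norm_le_of_continuousOn {X : ℂ → ℂ} {S : Set ℂ} (hS : IsClosed S)
    (hX : ContinuousOn X S) {R C : ℝ} (hC : ∀ s ∈ S, R ≤ ‖s‖ → ‖X s‖ ≤ C) :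
    ∃ B, ∀ s ∈ S, ‖X s‖ ≤ B := by
  obtain ⟨B, hB⟩ := ((isCompact_closedBall 0 R).inter_right hS).exists_bound_of_continuousOn
    (hX.mono inter_subset_right)
  refine ⟨max B C, fun s hs ↦ ?_⟩
  rcases le_total R ‖s‖ with h | h
  · exact (hC s hs h).trans (le_max_right _ _)
  · exact (hB s ⟨by simpa using h, hs⟩).trans (le_max_left _ _)

lemma re_div_pos_iff {a b : ℂ} (hb : b ≠ 0) : 0 < (a / b).re ↔ 0 < (a * conj b).re := by
  rw [div_eq_mul_inv, inv_def, ← mul_assoc, re_mul_ofReal]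
  exact mul_pos_iff_of_pos_right (inv_pos.mpr (normSq_pos.mpr hb))

/-! ### The zeros of `f₂` from positivity on the critical line -/

/-- The cofactor of `s - 2` in `f2`. -/
noncomputable def f2Bracket (s : ℂ) : ℂ :=
  (A * s + 3) * (s - 1) ^ 2 * chi (s + 2) - 2 * (s - 1) * (s - 3) * chi (s + 1)
    - (s + 2) * (s - 3) * chi s

/-- The zero-free factor of the dominant term `(A s + 3) (s - 1)² χ(s + 2)` of `f2Bracket`. -/
noncomputable def f2Denom (s : ℂ) : ℂ := chi (s + 2) * (A * s + 3)

/-- The monic real quadratic with roots `ρ` and `conj ρ`. -/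
noncomputable def conjQuadratic (ρ s : ℂ) : ℂ := (s - ρ) * (s - conj ρ)

/-- A division-free quantity with the sign of the real part of
`f2Bracket s / (f2Denom s * conjQuadratic ρ s)`. -/
noncomputable def boundaryForm (ρ s : ℂ) : ℝ :=
  (f2Bracket s * conj (f2Denom s * conjQuadratic ρ s)).re

lemma f2_eq_sub_two_mul (s : ℂ) : f2 s = (s - 2) * f2Bracket s := rfl

lemma A_eq_ofReal : A = ((Real.pi / 3 - 1 : ℝ) : ℂ) := by
  rw [A]
  push_cast
  rfl

lemma differentiable_chi_add (c : ℂ) : Differentiable ℂ fun s ↦ chi (s + c) :=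
  differentiable_chi.comp (by fun_prop)

lemma differentiable_f2Bracket : Differentiable ℂ f2Bracket := by
  have := differentiable_chi
  have := differentiable_chi_add 1
  have := differentiable_chi_add 2
  unfold f2Bracket
  fun_prop

lemma differentiable_f2Denom : Differentiable ℂ f2Denom := by
  have := differentiable_chi_add 2
  unfold f2Denom
  fun_prop

lemma chi_conj_add_ofNat (s : ℂ) (n : ℕ) [n.AtLeastTwo] :
    chi (conj s + ofNat(n)) = conj (chi (s + ofNat(n))) := by
  rw [← chi_conj, map_add, map_ofNat]

lemma f2Bracket_conj (s : ℂ) : f2Bracket (conj s) = conj (f2Bracket s) := by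
  have chi_conj_add_one : chi (conj s + 1) = conj (chi (s + 1)) := by
    rw [← chi_conj, map_add, map_one]
  rw [f2Bracket, f2Bracket, chi_conj_add_ofNat, chi_conj_add_one, chi_conj, A_eq_ofReal]
  simp only [map_sub, map_mul, map_add, map_pow, conj_ofReal, map_ofNat, map_one]

lemma f2Denom_conj (s : ℂ) : f2Denom (conj s) = conj (f2Denom s) := by
  rw [f2Denom, f2Denom, chi_conj_add_ofNat, A_eq_ofReal]
  simp only [map_mul, map_add, conj_ofReal, map_ofNat]

lemma conjQuadratic_conj (ρ s : ℂ) : conjQuadratic ρ (conj s) = conj (conjQuadratic ρ s) := by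
  rw [conjQuadratic, conjQuadratic, map_mul, map_sub, map_sub, conj_conj, mul_comm]

lemma boundaryForm_conj (ρ s : ℂ) : boundaryForm ρ (conj s) = boundaryForm ρ s := by
  rw [boundaryForm, f2Bracket_conj, f2Denom_conj, conjQuadratic_conj, ← map_mul, ← map_mul,
    conj_re, boundaryForm]

section RightHalfPlane

variable {s : ℂ}

lemma three_le_norm_A_mul_add_three (hs : 0 ≤ s.re) : 3 ≤ ‖A * s + 3‖ := by
  refine le_trans ?_ (re_le_norm _)
  rw [A_eq_ofReal, add_re, re_ofReal_mul, re_ofNat]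
  nlinarith [Real.pi_gt_three]

lemma chi_add_two_ne_zero (hs : 0 ≤ s.re) : chi (s + 2) ≠ 0 :=
  chi_ne_zero_of_one_le_re (by rw [add_re, re_ofNat]; linarith)

lemma f2Denom_ne_zero (hs : 0 ≤ s.re) : f2Denom s ≠ 0 :=
  mul_ne_zero (chi_add_two_ne_zero hs)
    (norm_pos_iff.mp (by linarith [three_le_norm_A_mul_add_three hs]))

lemma norm_chi_add_one_le_norm_chi_add_two (hs : 0 ≤ s.re) : ‖chi (s + 1)‖ ≤ ‖chi (s + 2)‖ := by
  have := norm_chi_le_norm_chi_add_one (s := s + 1) (by rw [add_re, one_re]; linarith)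
  rwa [add_assoc, one_add_one_eq_two] at this

lemma norm_lower_terms_le (hs : 0 ≤ s.re) :
    ‖2 * (s - 1) * (s - 3) * chi (s + 1) + (s + 2) * (s - 3) * chi s‖ ≤
      (2 * ‖s - 1‖ + ‖s + 2‖) * ‖s - 3‖ * ‖chi (s + 2)‖ := by
  have hchi₁ := norm_chi_add_one_le_norm_chi_add_two hs
  have hchi₀ := (norm_chi_le_norm_chi_add_one hs).trans hchi₁
  calc _ ≤ ‖2 * (s - 1) * (s - 3) * chi (s + 1)‖ + ‖(s + 2) * (s - 3) * chi s‖ := norm_add_le _ _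
    _ = 2 * ‖s - 1‖ * ‖s - 3‖ * ‖chi (s + 1)‖ + ‖s + 2‖ * ‖s - 3‖ * ‖chi s‖ := by
        simp only [norm_mul, norm_ofNat]
    _ ≤ 2 * ‖s - 1‖ * ‖s - 3‖ * ‖chi (s + 2)‖ + ‖s + 2‖ * ‖s - 3‖ * ‖chi (s + 2)‖ := by gcongr
    _ = _ := by ring

lemma norm_f2Bracket_le (hs : 0 ≤ s.re) (hs3 : 3 ≤ ‖s‖) :
    ‖f2Bracket s‖ ≤ 8 * ‖s‖ ^ 2 * ‖f2Denom s‖ := by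
  have sub_one : ‖s - 1‖ ≤ 2 * ‖s‖ := by linarith [norm_sub_le s 1, norm_one (α := ℂ)]
  have sub_three : ‖s - 3‖ ≤ 2 * ‖s‖ := by linarith [norm_sub_le s 3, Complex.norm_ofNat 3]
  have add_two : ‖s + 2‖ ≤ 2 * ‖s‖ := by linarith [norm_add_le s 2, Complex.norm_ofNat 2]
  have hA := three_le_norm_A_mul_add_three hs
  calc ‖f2Bracket s‖
      ≤ ‖(A * s + 3) * (s - 1) ^ 2 * chi (s + 2)‖ +
          ‖2 * (s - 1) * (s - 3) * chi (s + 1) + (s + 2) * (s - 3) * chi s‖ := by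
        rw [f2Bracket, sub_sub]
        exact norm_sub_le _ _
    _ ≤ ‖A * s + 3‖ * ‖s - 1‖ ^ 2 * ‖chi (s + 2)‖ +
          (2 * ‖s - 1‖ + ‖s + 2‖) * ‖s - 3‖ * ‖chi (s + 2)‖ := by
        rw [norm_mul, norm_mul, norm_pow]
        gcongr
        exact norm_lower_terms_le hs
    _ ≤ ‖A * s + 3‖ * (2 * ‖s‖) ^ 2 * ‖chi (s + 2)‖ +
          (2 * (2 * ‖s‖) + 2 * ‖s‖) * (2 * ‖s‖) * ‖chi (s + 2)‖ := by gcongr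
    _ = 4 * ‖s‖ ^ 2 * ‖chi (s + 2)‖ * (‖A * s + 3‖ + 3) := by ring
    _ ≤ 4 * ‖s‖ ^ 2 * ‖chi (s + 2)‖ * (‖A * s + 3‖ + ‖A * s + 3‖) := by gcongr
    _ = 8 * ‖s‖ ^ 2 * ‖f2Denom s‖ := by
        rw [f2Denom, norm_mul]
        ring

lemma norm_div_f2Denom_le {ρ w : ℂ} (hs : 0 ≤ s.re) (hs3 : 2 * ‖ρ‖ + 3 ≤ ‖s‖)
    (hw : f2Bracket s = conjQuadratic ρ s * w) : ‖w / f2Denom s‖ ≤ 32 := by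
  have quadratic_lower : ‖s‖ / 2 * (‖s‖ / 2) ≤ ‖conjQuadratic ρ s‖ := by
    rw [conjQuadratic, norm_mul]
    gcongr
    · linarith [norm_sub_norm_le s ρ]
    · linarith [norm_sub_norm_le s (conj ρ), norm_conj ρ]
  have bracket_le : ‖s‖ ^ 2 * ‖w‖ ≤ ‖s‖ ^ 2 * (32 * ‖f2Denom s‖) := by
    have upper := norm_f2Bracket_le hs (by linarith [norm_nonneg ρ])
    rw [hw, norm_mul] at upper
    linarith [mul_le_mul_of_nonneg_right quadratic_lower (norm_nonneg w)]
  rw [norm_div, div_le_iff₀ (norm_pos_iff.mpr (f2Denom_ne_zero hs))]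
  exact le_of_mul_le_mul_left bracket_le (pow_pos (by linarith [norm_nonneg ρ]) 2)

end RightHalfPlane

section Criterion

variable {ρ : ℂ}

lemma conjQuadratic_ne_zero_of_re_eq_half (hre : 1 / 2 < ρ.re) {s : ℂ} (hs : s.re = 1 / 2) :
    conjQuadratic ρ s ≠ 0 := by
  refine mul_ne_zero (sub_ne_zero.mpr ?_) (sub_ne_zero.mpr ?_) <;> rintro rfl
  · exact hre.ne' hs
  · exact hre.ne' (by rwa [conj_re] at hs)

lemma boundaryForm_pos_of_re_eq_half
    (hpos : ∀ t : ℝ, 0 ≤ t → 0 < boundaryForm ρ (1 / 2 + t * I)) {s : ℂ}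
    (hs : s.re = 1 / 2) : 0 < boundaryForm ρ s := by
  rcases le_total 0 s.im with him | him
  · convert hpos s.im him using 2
    apply Complex.ext <;> simp [hs]
  · rw [← boundaryForm_conj]
    convert hpos (-s.im) (by linarith) using 2
    apply Complex.ext <;> simp [hs]

lemma cofactor_ne_zero_of_boundaryForm_pos (hre : 1 / 2 < ρ.re)
    (hpos : ∀ t : ℝ, 0 ≤ t → 0 < boundaryForm ρ (1 / 2 + t * I)) {k : ℂ → ℂ}
    (hk : Differentiable ℂ k) (hfactor : ∀ s, f2Bracket s = conjQuadratic ρ s * k s) {s : ℂ}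
    (hs : 1 / 2 ≤ s.re) : k s ≠ 0 := by
  have differentiableAt_quotient (z : ℂ) (hz : 1 / 2 ≤ z.re) :
      DifferentiableAt ℂ (fun w ↦ k w / f2Denom w) z :=
    (hk z).div (differentiable_f2Denom z) (f2Denom_ne_zero (by linarith))
  obtain ⟨B, hB⟩ := exists_forall_norm_le_of_continuousOn
    (isClosed_le continuous_const continuous_re)
    (fun z hz ↦ (differentiableAt_quotient z hz).continuousAt.continuousWithinAt)
    (fun z (hz : 1 / 2 ≤ z.re) hzn ↦ norm_div_f2Denom_le (by linarith) hzn (hfactor z))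
  have re_pos_on_line (z : ℂ) (hz : z.re = 1 / 2) : 0 < (k z / f2Denom z).re := by
    have hquad := conjQuadratic_ne_zero_of_re_eq_half hre hz
    have hdenom := f2Denom_ne_zero (s := z) (by linarith)
    rw [← mul_div_mul_left _ _ hquad, ← hfactor, mul_comm,
      re_div_pos_iff (mul_ne_zero hdenom hquad)]
    exact boundaryForm_pos_of_re_eq_half hpos hz
  intro hks
  have := re_pos_of_re_pos_on_line differentiableAt_quotient hB re_pos_on_line hs
  simp [hks] at this

theorem f2_zeros_of_boundaryForm_pos (hre : 1 / 2 < ρ.re) (him : 0 < ρ.im)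
    (hpos : ∀ t : ℝ, 0 ≤ t → 0 < boundaryForm ρ (1 / 2 + t * I))
    (hzero : f2Bracket ρ = 0) :
    {s : ℂ | 1 / 2 ≤ s.re ∧ f2 s = 0} = {2, ρ, conj ρ} ∧
      deriv f2 2 ≠ 0 ∧ deriv f2 ρ ≠ 0 ∧ deriv f2 (conj ρ) ≠ 0 := by
  have hne : ρ ≠ conj ρ := fun h ↦ him.ne' (conj_eq_iff_im.mp h.symm)
  have hne2 : 2 ∉ ({ρ, conj ρ} : Finset ℂ) := by
    rw [Finset.mem_insert, Finset.mem_singleton, not_or]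
    constructor <;> intro h <;> simpa [him.ne, him.ne'] using congrArg im h
  obtain ⟨k, hk, hfactor⟩ := exists_differentiable_eq_sub_mul_sub_mul differentiable_f2Bracket
    hne hzero (by rw [f2Bracket_conj, hzero, map_zero])
  have f2_eq : f2 = fun s ↦ (∏ d ∈ {2, ρ, conj ρ}, (s - d)) * k s := by
    funext s
    rw [f2_eq_sub_two_mul, hfactor, Finset.prod_insert hne2, Finset.prod_pair hne,
      mul_assoc (s - 2)]
  have hk0 {s : ℂ} (hs : 1 / 2 ≤ s.re) : k s ≠ 0 :=
    cofactor_ne_zero_of_boundaryForm_pos hre hpos hk hfactor hs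
  have re_roots {c : ℂ} (hc : c ∈ ({2, ρ, conj ρ} : Finset ℂ)) : 1 / 2 ≤ c.re := by
    simp only [Finset.mem_insert, Finset.mem_singleton] at hc
    rcases hc with rfl | rfl | rfl
    · norm_num
    · exact hre.le
    · exact hre.le.trans_eq (conj_re ρ).symm
  have simple_root {c : ℂ} (hc : c ∈ ({2, ρ, conj ρ} : Finset ℂ)) : deriv f2 c ≠ 0 := by
    rw [f2_eq]
    exact deriv_prod_sub_mul_ne_zero hc (hk c) (hk0 (re_roots hc))
  refine ⟨?_, simple_root (by simp), simple_root (by simp), simple_root (by simp)⟩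
  ext s
  have mem_iff : s ∈ ({2, ρ, conj ρ} : Set ℂ) ↔ s ∈ ({2, ρ, conj ρ} : Finset ℂ) := by simp
  rw [mem_iff, mem_ofPred_eq, f2_eq, mul_eq_zero, Finset.prod_eq_zero_iff]
  constructor
  · rintro ⟨hs, ⟨d, hd, hsd⟩ | hks⟩
    · exact sub_eq_zero.mp hsd ▸ hd
    · exact (hk0 hs hks).elim
  · exact fun hs ↦ ⟨re_roots hs, Or.inl ⟨s, hs, sub_self s⟩⟩

end Criterion

/-! ### Positivity far up the critical line -/

lemma boundaryForm_eq (ρ s : ℂ) :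
    boundaryForm ρ s = ‖f2Denom s‖ ^ 2 * ((s - 1) ^ 2 * conj (conjQuadratic ρ s)).re -
      ((2 * (s - 1) * (s - 3) * chi (s + 1) + (s + 2) * (s - 3) * chi s) *
        conj (f2Denom s * conjQuadratic ρ s)).re := by
  rw [boundaryForm, ← re_ofReal_mul, ← sub_re, ← normSq_eq_norm_sq, ← mul_conj, map_mul, f2Bracket,
    f2Denom]
  ring_nf

lemma boundaryForm_pos_of_lower_terms_lt {ρ s : ℂ} (hs : 0 ≤ s.re)
    (hlt : (2 * ‖s - 1‖ + ‖s + 2‖) * ‖s - 3‖ * ‖conjQuadratic ρ s‖ <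
      ‖A * s + 3‖ * ((s - 1) ^ 2 * conj (conjQuadratic ρ s)).re) : 0 < boundaryForm ρ s := by
  set R := 2 * (s - 1) * (s - 3) * chi (s + 1) + (s + 2) * (s - 3) * chi s with hR
  have hchi : 0 < ‖chi (s + 2)‖ := norm_pos_iff.mpr (chi_add_two_ne_zero hs)
  have hdenom : 0 < ‖f2Denom s‖ := norm_pos_iff.mpr (f2Denom_ne_zero hs)
  have lower_terms_lt : (R * conj (f2Denom s * conjQuadratic ρ s)).re <
      ‖f2Denom s‖ ^ 2 * ((s - 1) ^ 2 * conj (conjQuadratic ρ s)).re :=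
    calc (R * conj (f2Denom s * conjQuadratic ρ s)).re
        ≤ ‖R‖ * (‖f2Denom s‖ * ‖conjQuadratic ρ s‖) := by
          refine (re_le_norm _).trans_eq ?_
          rw [norm_mul, norm_conj, norm_mul]
      _ ≤ (2 * ‖s - 1‖ + ‖s + 2‖) * ‖s - 3‖ * ‖chi (s + 2)‖ *
            (‖f2Denom s‖ * ‖conjQuadratic ρ s‖) := by
          gcongr
          exact norm_lower_terms_le hs
      _ = ‖chi (s + 2)‖ * ‖f2Denom s‖ *
            ((2 * ‖s - 1‖ + ‖s + 2‖) * ‖s - 3‖ * ‖conjQuadratic ρ s‖) := by ring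
      _ < ‖chi (s + 2)‖ * ‖f2Denom s‖ *
            (‖A * s + 3‖ * ((s - 1) ^ 2 * conj (conjQuadratic ρ s)).re) := by gcongr
      _ = _ := by
          rw [f2Denom, norm_mul]
          ring
  rw [boundaryForm_eq, ← hR]
  linarith

section CriticalLine

variable (ρ : ℂ) (t : ℝ)

lemma conjQuadratic_half_add_mul_I : conjQuadratic ρ (1 / 2 + t * I) =
    (-(t ^ 2 - 1 / 4 + ρ.re - normSq ρ) : ℝ) + (-(t * (2 * ρ.re - 1)) : ℝ) * I := by
  have expand (s : ℂ) : conjQuadratic ρ s = s ^ 2 - (2 * ρ.re : ℝ) * s + normSq ρ := by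
    rw [conjQuadratic, ← mul_conj, ← add_conj]
    ring
  rw [expand]
  push_cast
  linear_combination (t : ℂ) ^ 2 * I_sq

lemma norm_conjQuadratic_half_sq : ‖conjQuadratic ρ (1 / 2 + t * I)‖ ^ 2 =
    (t ^ 2 - 1 / 4 + ρ.re - normSq ρ) ^ 2 + t ^ 2 * (2 * ρ.re - 1) ^ 2 := by
  rw [conjQuadratic_half_add_mul_I, ← normSq_eq_norm_sq, normSq_add_mul_I]
  ring

lemma re_sub_one_sq_mul_conj_conjQuadratic_half :
    ((1 / 2 + t * I - 1) ^ 2 * conj (conjQuadratic ρ (1 / 2 + t * I))).re =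
      (t ^ 2 - 1 / 4) * (t ^ 2 - 1 / 4 + ρ.re - normSq ρ) + t ^ 2 * (2 * ρ.re - 1) := by
  have sq_eq : (1 / 2 + t * I - 1) ^ 2 = ((1 / 4 - t ^ 2 : ℝ) : ℂ) + (-t : ℝ) * I := by
    push_cast
    linear_combination (t : ℂ) ^ 2 * I_sq
  rw [sq_eq, conjQuadratic_half_add_mul_I]
  simp only [mul_re, add_re, add_im, mul_im, conj_re, conj_im, ofReal_re, ofReal_im, I_re, I_im]
  ring

lemma norm_A_mul_half_add_three_sq_ge :
    3.023 ^ 2 + 0.04719 ^ 2 * t ^ 2 ≤ ‖A * (1 / 2 + t * I) + 3‖ ^ 2 := by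
  set a := Real.pi / 3 - 1 with ha
  have ha_ge : 0.04719 ≤ a := by linarith [Real.pi_gt_d6]
  have split : A * (1 / 2 + t * I) + 3 = ((a / 2 + 3 : ℝ) : ℂ) + (a * t : ℝ) * I := by
    rw [A_eq_ofReal, ← ha]
    push_cast
    ring
  rw [split, ← normSq_eq_norm_sq, normSq_add_mul_I, mul_pow]
  gcongr
  linarith

lemma lower_terms_coeff_half_le :
    (2 * ‖(1 / 2 + t * I - 1 : ℂ)‖ + ‖(1 / 2 + t * I + 2 : ℂ)‖) * ‖(1 / 2 + t * I - 3 : ℂ)‖ ≤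
      3 * t ^ 2 + 12.75 := by
  have norm_sq (c : ℝ) : ‖(c + t * I : ℂ)‖ ^ 2 = c ^ 2 + t ^ 2 := by
    rw [← normSq_eq_norm_sq, normSq_add_mul_I]
  have h₁ := norm_sq (-1 / 2)
  have h₂ := norm_sq (5 / 2)
  have h₃ := norm_sq (-5 / 2)
  rw [show (1 / 2 + t * I - 1 : ℂ) = (-1 / 2 : ℝ) + t * I by push_cast; ring,
    show (1 / 2 + t * I + 2 : ℂ) = (5 / 2 : ℝ) + t * I by push_cast; ring,
    show (1 / 2 + t * I - 3 : ℂ) = (-5 / 2 : ℝ) + t * I by push_cast; ring]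
  linarith [two_mul_le_add_sq ‖((-1 / 2 : ℝ) + t * I : ℂ)‖ ‖((-5 / 2 : ℝ) + t * I : ℂ)‖,
    two_mul_le_add_sq ‖((5 / 2 : ℝ) + t * I : ℂ)‖ ‖((-5 / 2 : ℝ) + t * I : ℂ)‖]

end CriticalLine

section LargeHeightPolynomials

variable {x p m : ℝ}

lemma leading_poly_ge (hx : 163.84 ≤ x) (hp : |p - 1.17| ≤ 0.007) (hm : |m - 13.129| ≤ 0.06) :
    (x - 0.25) * (x - 12.28) + 1.326 * x ≤
      (x - 1 / 4) * (x - 1 / 4 + p - m) + x * (2 * p - 1) := by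
  rw [abs_le] at hp hm
  nlinarith

lemma quadratic_norm_sq_le (hx : 163.84 ≤ x) (hp : |p - 1.17| ≤ 0.007)
    (hm : |m - 13.129| ≤ 0.06) :
    (x - 1 / 4 + p - m) ^ 2 + x * (2 * p - 1) ^ 2 ≤ (x - 12.14) ^ 2 + 1.834 * x := by
  rw [abs_le] at hp hm
  have re_sq : (x - 1 / 4 + p - m) ^ 2 ≤ (x - 12.14) ^ 2 := by
    apply pow_le_pow_left₀ <;> linarith
  have im_sq : (2 * p - 1) ^ 2 ≤ 1.834 := by nlinarith
  nlinarith

lemma leading_poly_pos (hx : 163.84 ≤ x) : 0 < (x - 0.25) * (x - 12.28) + 1.326 * x := by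
  nlinarith

lemma lower_terms_poly_lt (hx : 163.84 ≤ x) (hp : |p - 1.17| ≤ 0.007)
    (hm : |m - 13.129| ≤ 0.06) :
    (3 * x + 12.75) ^ 2 * ((x - 1 / 4 + p - m) ^ 2 + x * (2 * p - 1) ^ 2) <
      (3.023 ^ 2 + 0.04719 ^ 2 * x) *
        ((x - 1 / 4) * (x - 1 / 4 + p - m) + x * (2 * p - 1)) ^ 2 := by
  have hpos := leading_poly_pos hx
  have expanded_at_threshold : (3 * x + 12.75) ^ 2 * ((x - 12.14) ^ 2 + 1.834 * x) <
      (3.023 ^ 2 + 0.04719 ^ 2 * x) * ((x - 0.25) * (x - 12.28) + 1.326 * x) ^ 2 := by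
    obtain ⟨y, hy, rfl⟩ : ∃ y : ℝ, 0 ≤ y ∧ x = 163.84 + y := ⟨x - 163.84, by linarith, by ring⟩
    rw [← sub_pos]
    ring_nf
    positivity
  calc _ ≤ (3 * x + 12.75) ^ 2 * ((x - 12.14) ^ 2 + 1.834 * x) := by
        gcongr _ * ?_
        exact quadratic_norm_sq_le hx hp hm
    _ < _ := expanded_at_threshold
    _ ≤ _ := by
        gcongr _ * ?_ ^ 2
        exact leading_poly_ge hx hp hm

end LargeHeightPolynomials

theorem boundaryForm_pos_of_large {ρ : ℂ} (hp : |ρ.re - 1.17| ≤ 0.007)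
    (hm : |normSq ρ - 13.129| ≤ 0.06) {t : ℝ} (ht : 12.8 ≤ t) :
    0 < boundaryForm ρ (1 / 2 + t * I) := by
  have hx : 163.84 ≤ t ^ 2 := by nlinarith
  have leading_pos := (leading_poly_pos hx).trans_le (leading_poly_ge hx hp hm)
  refine boundaryForm_pos_of_lower_terms_lt (by simp) ?_
  rw [re_sub_one_sq_mul_conj_conjQuadratic_half]
  refine (mul_le_mul_of_nonneg_right (lower_terms_coeff_half_le t) (norm_nonneg _)).trans_lt ?_
  refine lt_of_pow_lt_pow_left₀ 2 (by positivity) ?_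
  rw [mul_pow, mul_pow, norm_conjQuadratic_half_sq]
  refine (lower_terms_poly_lt hx hp hm).trans_le ?_
  gcongr
  exact norm_A_mul_half_add_three_sq_ge t

/-! ### Exact arithmetic with Gaussian integer polynomials -/

/-- Polynomials with integer coefficients in increasing degree; lists, unlike `Polynomial ℤ`,
compute in the kernel. -/
abbrev IntPoly : Type := List ℤ

namespace IntPoly

/-- The value of an integer polynomial at a point of a commutative ring. -/
def eval {R : Type*} [CommRing R] : IntPoly → R → R
  | [], _ => 0
  | a :: p, x => a + x * eval p x

/-- The sum of two integer polynomials. -/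
def add : IntPoly → IntPoly → IntPoly
  | [], q => q
  | a :: p, [] => a :: p
  | a :: p, b :: q => Int.add a b :: add p q

/-- The multiple of an integer polynomial by a constant. -/
def smul (c : ℤ) : IntPoly → IntPoly
  | [] => []
  | a :: p => Int.mul c a :: smul c p

/-- The product of two integer polynomials. -/
def mul : IntPoly → IntPoly → IntPoly
  | [], _ => []
  | a :: p, q => add (smul a q) (0 :: mul p q)

/-- The polynomial `a + (X + 1) p`. -/
def addXAddOneMul (a : ℤ) (p : IntPoly) : IntPoly :=
  List.rec (motive := fun _ ↦ ℤ → IntPoly) (fun a ↦ [a]) (fun b _ ih a ↦ Int.add a b :: ih b) p a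

/-- The Taylor shift `p (X + 1)`, written with the recursor so that the kernel reduces it fast. -/
def shift (p : IntPoly) : IntPoly :=
  List.rec (motive := fun _ ↦ IntPoly) [] (fun a _ ih ↦ addXAddOneMul a ih) p

section Eval

variable {R : Type*} [CommRing R] (c : ℤ) (p q : IntPoly) (x : R)

@[simp] lemma eval_nil : eval [] x = 0 := rfl

@[simp] lemma eval_cons : eval (c :: p) x = c + x * eval p x := rfl

lemma eval_add : eval (add p q) x = eval p x + eval q x := by
  induction p generalizing q with
  | nil => simp [add]
  | cons a p ih =>
    cases q with
    | nil => simp [add]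
    | cons b q =>
      simp only [add, eval_cons, ih, Int.add_def, Int.cast_add]
      ring

lemma eval_smul : eval (smul c p) x = c * eval p x := by
  induction p with
  | nil => simp [smul]
  | cons a p ih =>
    simp only [smul, eval_cons, ih, Int.mul_def, Int.cast_mul]
    ring

lemma eval_mul : eval (mul p q) x = eval p x * eval q x := by
  induction p with
  | nil => simp [mul]
  | cons a p ih =>
    simp only [mul, eval_add, eval_smul, eval_cons, ih, Int.cast_zero]
    ring

lemma eval_addXAddOneMul : eval (addXAddOneMul c p) x = c + (x + 1) * eval p x := by
  induction p generalizing c with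
  | nil => simp [addXAddOneMul]
  | cons b p ih =>
    have unfold_cons : addXAddOneMul c (b :: p) = (c + b) :: addXAddOneMul b p := rfl
    rw [unfold_cons, eval_cons, eval_cons, ih, Int.cast_add]
    ring

lemma eval_shift : eval (shift p) x = eval p (x + 1) := by
  induction p with
  | nil => rfl
  | cons a p ih =>
    have unfold_cons : shift (a :: p) = addXAddOneMul a (shift p) := rfl
    rw [unfold_cons, eval_addXAddOneMul, ih, eval_cons]

lemma eval_eq_headD_add : eval p x = (p.headD 0 : ℤ) + x * eval p.tail x := by
  cases p <;> simp

end Eval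

/-- An upper bound for the modulus of an integer polynomial on the disc of radius `1 / 2`. -/
def halfBound : IntPoly → ℤ
  | [] => 0
  | a :: p => |a| + (halfBound p + 1) / 2

end IntPoly

lemma norm_mul_le_half_round_up {r : ℤ} {x w : ℂ} (hx : ‖x‖ ≤ 1 / 2) (hw : ‖w‖ ≤ r) :
    ‖x * w‖ ≤ ((r + 1) / 2 : ℤ) := by
  have round_up : (r : ℝ) ≤ 2 * ((r + 1) / 2 : ℤ) := by
    exact_mod_cast (by lia : r ≤ 2 * ((r + 1) / 2))
  rw [norm_mul]
  nlinarith [norm_nonneg x, norm_nonneg w]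

lemma IntPoly.norm_eval_le_halfBound (p : IntPoly) {x : ℂ} (hx : ‖x‖ ≤ 1 / 2) :
    ‖p.eval x‖ ≤ p.halfBound := by
  induction p with
  | nil => simp [halfBound]
  | cons a p ih =>
    rw [eval_cons, halfBound, Int.cast_add]
    refine norm_add_le_of_le ?_ (norm_mul_le_half_round_up hx ih)
    rw [norm_intCast, Int.cast_abs]

/-- An upper bound for `|a + b I|` that avoids square roots. -/
def gaussBound (a b : ℤ) : ℤ := max |a| |b| + (min |a| |b| + 1) / 2

lemma norm_le_gaussBound (a b : ℤ) : ‖(a + I * b : ℂ)‖ ≤ gaussBound a b := by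
  have round_up : ((min |a| |b| : ℤ) : ℝ) ≤ 2 * ((min |a| |b| + 1) / 2 : ℤ) := by
    exact_mod_cast (by lia : min |a| |b| ≤ 2 * ((min |a| |b| + 1) / 2))
  have min_nonneg : (0 : ℝ) ≤ (min |a| |b| : ℤ) := by exact_mod_cast (by positivity)
  have min_le_max : ((min |a| |b| : ℤ) : ℝ) ≤ (max |a| |b| : ℤ) := by
    exact_mod_cast min_le_max
  have sq_add_sq : (a : ℝ) ^ 2 + b ^ 2 = (max |a| |b| : ℤ) ^ 2 + (min |a| |b| : ℤ) ^ 2 := by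
    rcases le_total |a| |b| with h | h <;> simp [h, add_comm]
  rw [gaussBound, Int.cast_add]
  refine le_of_sq_le_sq ?_ (by linarith)
  rw [← normSq_eq_norm_sq, mul_comm, ← ofReal_intCast, ← ofReal_intCast, normSq_add_mul_I,
    sq_add_sq]
  nlinarith

/-- Polynomials with Gaussian integer coefficients, as pairs of real and imaginary parts. -/
abbrev GaussPoly : Type := IntPoly × IntPoly

namespace GaussPoly

/-- The value of a Gaussian integer polynomial at a complex number. -/
noncomputable def eval (p : GaussPoly) (x : ℂ) : ℂ := p.1.eval x + I * p.2.eval x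

/-- The sum of two Gaussian integer polynomials. -/
def add (p q : GaussPoly) : GaussPoly := (p.1.add q.1, p.2.add q.2)

/-- The multiple of a Gaussian integer polynomial by an integer. -/
def smul (c : ℤ) (p : GaussPoly) : GaussPoly := (p.1.smul c, p.2.smul c)

/-- The constant polynomial with value an integer. -/
def const (c : ℤ) : GaussPoly := ([c], [])

/-- The product of two Gaussian integer polynomials. -/
def mul (p q : GaussPoly) : GaussPoly :=
  ((p.1.mul q.1).add ((p.2.mul q.2).smul (-1)), (p.1.mul q.2).add (p.2.mul q.1))

/-- The Taylor shift `p (X + 1)`. -/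
def shift (p : GaussPoly) : GaussPoly := (p.1.shift, p.2.shift)

/-- The composition `q (p / D)` with denominators cleared, `D ^ (q.length - 1) * q (p / D)`. -/
def homogComp (D : ℤ) (p : GaussPoly) : IntPoly → GaussPoly
  | [] => ([], [])
  | a :: q => add (const (a * D ^ q.length)) (mul p (homogComp D p q))

section Eval

variable (c : ℤ) (p q : GaussPoly) (x : ℂ)

lemma eval_add : eval (add p q) x = eval p x + eval q x := by
  simp only [eval, add, IntPoly.eval_add]
  ring

lemma eval_smul : eval (smul c p) x = c * eval p x := by
  simp only [eval, smul, IntPoly.eval_smul]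
  ring

lemma eval_const : eval (const c) x = c := by
  simp [eval, const]

lemma eval_mul : eval (mul p q) x = eval p x * eval q x := by
  simp only [eval, mul, IntPoly.eval_add, IntPoly.eval_mul, IntPoly.eval_smul, Int.cast_neg,
    Int.cast_one]
  linear_combination (-(p.2.eval x * q.2.eval x)) * I_mul_I

lemma eval_shift : eval (shift p) x = eval p (x + 1) := by
  simp only [eval, shift, IntPoly.eval_shift]

lemma eval_homogComp {D : ℤ} (hD : D ≠ 0) (q : IntPoly) :
    D * eval (homogComp D p q) x = D ^ q.length * q.eval (eval p x / D) := by
  have hD' : (D : ℂ) ≠ 0 := by exact_mod_cast hD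
  induction q with
  | nil => simp [homogComp, eval]
  | cons a q ih =>
    simp only [homogComp, eval_add, eval_const, eval_mul, IntPoly.eval_cons, List.length_cons,
      Int.cast_mul, Int.cast_pow]
    rw [mul_add, mul_left_comm (D : ℂ) (eval p x), ih]
    field_simp
    ring

end Eval

/-- An upper bound for the modulus of `p + I q` on the disc of radius `1 / 2`. -/
def halfBound : IntPoly → IntPoly → ℤ
  | [], q => q.halfBound
  | a :: p, [] => IntPoly.halfBound (a :: p)
  | a :: p, b :: q => gaussBound a b + (halfBound p q + 1) / 2

lemma norm_eval_le_halfBound (p q : IntPoly) {x : ℂ} (hx : ‖x‖ ≤ 1 / 2) :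
    ‖p.eval x + I * q.eval x‖ ≤ halfBound p q := by
  induction p generalizing q with
  | nil => simpa [halfBound] using q.norm_eval_le_halfBound hx
  | cons a p ih =>
    cases q with
    | nil => simpa [halfBound] using IntPoly.norm_eval_le_halfBound (a :: p) hx
    | cons b q =>
      have split : IntPoly.eval (a :: p) x + I * IntPoly.eval (b :: q) x =
          (a + I * b) + x * (IntPoly.eval p x + I * IntPoly.eval q x) := by
        simp only [IntPoly.eval_cons]
        ring
      rw [split, halfBound, Int.cast_add]
      exact norm_add_le_of_le (norm_le_gaussBound a b) (norm_mul_le_half_round_up hx (ih q))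

end GaussPoly

/-- Closed discs with integral radius centred at a Gaussian integer. -/
structure GaussDisc where
  /-- The real part of the centre. -/
  re : ℤ
  /-- The imaginary part of the centre. -/
  im : ℤ
  /-- The radius. -/
  radius : ℤ

namespace GaussDisc

/-- Membership of a complex number in a disc. -/
def Contains (d : GaussDisc) (z : ℂ) : Prop := ‖z - (d.re + I * d.im)‖ ≤ d.radius

/-- A disc containing all products of elements of two discs. -/
def mul (d e : GaussDisc) : GaussDisc where
  re := d.re * e.re - d.im * e.im
  im := d.re * e.im + d.im * e.re
  radius := gaussBound d.re d.im * e.radius + gaussBound e.re e.im * d.radius +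
    d.radius * e.radius

/-- The complex conjugate of a disc. -/
def conjugate (d : GaussDisc) : GaussDisc := ⟨d.re, -d.im, d.radius⟩

/-- A disc containing the values of `p` on the disc of radius `1 / 2`, enlarged by `ε`. -/
def ofPoly (p : GaussPoly) (ε : ℤ) : GaussDisc :=
  ⟨p.1.headD 0, p.2.headD 0, (GaussPoly.halfBound p.1.tail p.2.tail + 1) / 2 + ε⟩

variable {d e : GaussDisc} {z w : ℂ}

lemma Contains.conjugate (hz : d.Contains z) : d.conjugate.Contains (conj z) := by
  rw [Contains, ← norm_conj]
  simpa [GaussDisc.conjugate, Contains] using hz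

lemma Contains.mul (hz : d.Contains z) (hw : e.Contains w) : (d.mul e).Contains (z * w) := by
  have expand : z * w - ((d.mul e).re + I * (d.mul e).im) =
      (d.re + I * d.im) * (w - (e.re + I * e.im)) + (e.re + I * e.im) * (z - (d.re + I * d.im)) +
        (z - (d.re + I * d.im)) * (w - (e.re + I * e.im)) := by
    simp only [GaussDisc.mul, Int.cast_sub, Int.cast_add, Int.cast_mul]
    linear_combination (d.im * e.im : ℂ) * I_mul_I
  rw [Contains, expand]
  simp only [GaussDisc.mul, Int.cast_add, Int.cast_mul]
  exact norm_add_le_of_le (norm_add_le_of_le (norm_mul_le_of_le (norm_le_gaussBound _ _) hw)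
    (norm_mul_le_of_le (norm_le_gaussBound _ _) hz)) (norm_mul_le_of_le hz hw)

lemma Contains.re_pos (hz : d.Contains z) (hd : d.radius < d.re) : 0 < z.re := by
  have abs_sub_le : |z.re - d.re| ≤ d.radius := by
    simpa using (abs_re_le_norm _).trans hz
  have : (d.radius : ℝ) < d.re := by exact_mod_cast hd
  linarith [abs_le.mp abs_sub_le]

lemma ofPoly_contains (p : GaussPoly) {ε : ℤ} {x : ℂ} (hx : ‖x‖ ≤ 1 / 2)
    (hz : ‖z - p.eval x‖ ≤ ε) : (ofPoly p ε).Contains z := by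
  have split : z - ((ofPoly p ε).re + I * (ofPoly p ε).im) =
      x * (IntPoly.eval p.1.tail x + I * IntPoly.eval p.2.tail x) + (z - p.eval x) := by
    rw [GaussPoly.eval, IntPoly.eval_eq_headD_add p.1, IntPoly.eval_eq_headD_add p.2, ofPoly]
    ring
  rw [Contains, split, ofPoly, Int.cast_add]
  exact norm_add_le_of_le
    (norm_mul_le_half_round_up hx (GaussPoly.norm_eval_le_halfBound _ _ hx)) hz

end GaussDisc

namespace IntPoly

lemma ofReal_eval (p : IntPoly) (x : ℝ) : ((eval p x : ℝ) : ℂ) = eval p (x : ℂ) := by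
  induction p with
  | nil => simp
  | cons a p ih => simp [ih]

lemma eval_map_range {R : Type*} [CommRing R] (f : ℕ → ℤ) (n : ℕ) (x : R) :
    eval ((List.range n).map f) x = ∑ i ∈ Finset.range n, f i * x ^ i := by
  induction n generalizing f with
  | zero => simp
  | succ n ih =>
    rw [List.range_succ_eq_map, List.map_cons, List.map_map, eval_cons, ih, Finset.sum_range_succ',
      Finset.mul_sum, add_comm, pow_zero, mul_one]
    congr 1
    refine Finset.sum_congr rfl fun i _ ↦ ?_
    rw [Function.comp_apply, Nat.succ_eq_add_one]
    ring

/-- The derivative of an integer polynomial. -/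
def derivative : IntPoly → IntPoly
  | [] => []
  | _ :: p => add p (0 :: derivative p)

lemma hasDerivAt_eval (p : IntPoly) (x : ℝ) : HasDerivAt (eval p) (eval p.derivative x) x := by
  induction p with
  | nil => exact hasDerivAt_const x 0
  | cons a p ih =>
    refine (((hasDerivAt_id x).mul ih).const_add (a : ℝ)).congr_deriv ?_
    simp [derivative, eval_add]

lemma continuous_eval (p : IntPoly) : Continuous (eval p : ℝ → ℝ) :=
  continuous_iff_continuousAt.mpr fun x ↦ (p.hasDerivAt_eval x).continuousAt

/-- The sum of the absolute values of the coefficients. -/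
def sumAbs : IntPoly → ℤ
  | [] => 0
  | a :: p => |a| + sumAbs p

lemma abs_eval_le_sumAbs (p : IntPoly) {x : ℝ} (hx0 : 0 ≤ x) (hx1 : x ≤ 1) :
    |p.eval x| ≤ p.sumAbs := by
  induction p with
  | nil => simp [sumAbs]
  | cons a p ih =>
    rw [eval_cons, sumAbs, Int.cast_add, Int.cast_abs]
    refine (abs_add_le _ _).trans (add_le_add_right ?_ _)
    rw [abs_mul, abs_of_nonneg hx0]
    exact (mul_le_of_le_one_left (abs_nonneg _) hx1).trans ih

/-- Whether `halfBound` certifies `M` as a bound on the discs of radius `1 / 2` centred at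
`0, 1, …, n - 1`. -/
def shiftsBoundedBy (M : ℤ) : ℕ → IntPoly → Bool
  | 0, _ => true
  | n + 1, p => decide (p.halfBound ≤ M) && shiftsBoundedBy M n p.shift

lemma norm_eval_add_natCast_le {M : ℤ} {n : ℕ} {p : IntPoly} (h : shiftsBoundedBy M n p = true)
    {j : ℕ} (hj : j < n) {x : ℂ} (hx : ‖x‖ ≤ 1 / 2) : ‖p.eval (x + j)‖ ≤ M := by
  induction n generalizing p j with
  | zero => lia
  | succ n ih =>
    rw [shiftsBoundedBy, Bool.and_eq_true, decide_eq_true_eq] at h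
    cases j with
    | zero => simpa using (p.norm_eval_le_halfBound hx).trans (Int.cast_le.mpr h.1)
    | succ j => simpa [eval_shift, add_assoc] using ih h.2 (Nat.lt_of_succ_lt_succ hj)

end IntPoly

lemma GaussPoly.eval_snd_homogComp (D : ℤ) (p q : IntPoly) (x : ℂ) :
    (homogComp D (p, []) q).2.eval x = 0 := by
  induction q with
  | nil => simp [homogComp]
  | cons a q ih =>
    simp [homogComp, add, const, mul, IntPoly.eval_add, IntPoly.eval_mul, ih, IntPoly.add,
      IntPoly.mul]

-- The interval `[0, 2 a n / D)` is cut into `n` pieces, each rescaled to radius `1 / 2`.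
lemma IntPoly.abs_eval_le_of_shiftsBoundedBy {a D M : ℤ} (ha : 0 < a) (hD : 0 < D) {n : ℕ}
    {p : IntPoly} (h : shiftsBoundedBy M n (GaussPoly.homogComp D ([a, 2 * a], []) p).1 = true)
    {u : ℝ} (hu0 : 0 ≤ u) (hu : D * u < 2 * a * n) :
    D ^ p.length * |p.eval u| ≤ D * M := by
  have hD' : (0 : ℝ) < D := by exact_mod_cast hD
  set v : ℝ := D * u / (2 * a) with hv
  have two_mul_pos : (0 : ℝ) < 2 * a := by exact_mod_cast (by lia : 0 < 2 * a)
  have v_nonneg : 0 ≤ v := by positivity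
  have floor_lt : ⌊v⌋₊ < n := by
    rw [Nat.floor_lt v_nonneg, hv, div_lt_iff₀ two_mul_pos, mul_comm (n : ℝ)]
    exact hu
  have offset_le : ‖((v - ⌊v⌋₊ - 1 / 2 : ℝ) : ℂ)‖ ≤ 1 / 2 := by
    rw [norm_real, Real.norm_eq_abs, abs_le]
    constructor <;> linarith [Nat.floor_le v_nonneg, Nat.lt_floor_add_one v]
  have bound := norm_eval_add_natCast_le h floor_lt offset_le
  have comp := GaussPoly.eval_homogComp ([a, 2 * a], []) (((v - ⌊v⌋₊ - 1 / 2 : ℝ) : ℂ) + ⌊v⌋₊)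
    hD.ne' p
  have point_eq : GaussPoly.eval ([a, 2 * a], []) (((v - ⌊v⌋₊ - 1 / 2 : ℝ) : ℂ) + ⌊v⌋₊) / D =
      (u : ℂ) := by
    have hDC : (D : ℂ) ≠ 0 := by exact_mod_cast hD.ne'
    have haC : (a : ℂ) ≠ 0 := by exact_mod_cast ha.ne'
    simp only [GaussPoly.eval, eval_cons, eval_nil, hv]
    push_cast
    field_simp
    ring
  rw [GaussPoly.eval, GaussPoly.eval_snd_homogComp, mul_zero, add_zero, point_eq,
    ← ofReal_eval] at comp
  have norm_comp := congrArg norm comp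
  rw [norm_mul, norm_mul, norm_pow, norm_intCast, abs_of_pos hD', norm_real,
    Real.norm_eq_abs] at norm_comp
  rw [← norm_comp]
  gcongr

/-! ### Polynomial approximation of the kernel -/

lemma hasSum_nat_thetaTail {x : ℝ} (hx : 0 < x) :
    HasSum (fun n : ℕ ↦ 2 * Real.exp (-Real.pi * ((n : ℝ) + 1) ^ 2 * x)) (thetaTail x) := by
  have term_eq (n : ℕ) : (if ((n + 1 : ℕ) : ℤ) = 0 then 0 else
        Real.exp (-Real.pi * (((n + 1 : ℕ) : ℤ) : ℝ) ^ 2 * x)) +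
      (if -((n + 1 : ℕ) : ℤ) = 0 then 0 else
        Real.exp (-Real.pi * ((-((n + 1 : ℕ) : ℤ) : ℤ) : ℝ) ^ 2 * x)) =
      2 * Real.exp (-Real.pi * ((n : ℝ) + 1) ^ 2 * x) := by
    have pos_ne : ((n + 1 : ℕ) : ℤ) ≠ 0 := by lia
    rw [if_neg pos_ne, if_neg (neg_ne_zero.mpr pos_ne), two_mul, Int.cast_neg, neg_sq]
    push_cast
    rfl
  simpa only [term_eq, Finset.range_one, Finset.sum_singleton, Nat.cast_zero, neg_zero, if_true,
    add_zero, sub_zero] using (hasSum_nat_add_iff' 1).mpr (hasSum_thetaTail hx).nat_add_neg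

lemma exp_neg_nine_le : Real.exp (-9) ≤ 0.0002 := by
  have exp_one_ge : (2.7 : ℝ) ≤ Real.exp 1 := by linarith [Real.exp_one_gt_d9]
  rw [Real.exp_neg, show (9 : ℝ) = (9 : ℕ) * 1 by norm_num, Real.exp_nat_mul]
  calc (Real.exp 1 ^ 9)⁻¹ ≤ ((2.7 : ℝ) ^ 9)⁻¹ := by gcongr
    _ ≤ 0.0002 := by norm_num

-- Since `(n + 2)² ≥ 4 + 3 n`, the terms beyond the first are dominated by a geometric series.
lemma thetaTail_sub_le {x : ℝ} (hx : 1 ≤ x) :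
    0 ≤ thetaTail x - 2 * Real.exp (-Real.pi * x) ∧
      thetaTail x - 2 * Real.exp (-Real.pi * x) ≤ 2.02 * Real.exp (-4 * Real.pi * x) := by
  have tail_sum : HasSum (fun n : ℕ ↦ 2 * Real.exp (-Real.pi * ((n : ℝ) + 2) ^ 2 * x))
      (thetaTail x - 2 * Real.exp (-Real.pi * x)) := by
    simpa [add_assoc, one_add_one_eq_two] using
      (hasSum_nat_add_iff' 1).mpr (hasSum_nat_thetaTail (x := x) (by linarith))
  refine ⟨tail_sum.nonneg fun n ↦ by positivity, ?_⟩
  have ratio_pos : 0 < Real.exp (-9) := Real.exp_pos _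
  have ratio_le := exp_neg_nine_le
  have geom := (hasSum_geometric_of_lt_one ratio_pos.le (by linarith)).mul_left
    (2 * Real.exp (-4 * Real.pi * x))
  have term_le (n : ℕ) : 2 * Real.exp (-Real.pi * ((n : ℝ) + 2) ^ 2 * x) ≤
      2 * Real.exp (-4 * Real.pi * x) * Real.exp (-9) ^ n := by
    rw [← Real.exp_nat_mul, mul_assoc 2, ← Real.exp_add]
    refine mul_le_mul_of_nonneg_left (Real.exp_le_exp.mpr ?_) zero_le_two
    have pi_mul_ge : 3 ≤ Real.pi * x := by nlinarith [Real.pi_gt_three]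
    have hn : (0 : ℝ) ≤ n := n.cast_nonneg
    nlinarith [mul_nonneg hn (sub_nonneg.mpr pi_mul_ge),
      mul_nonneg (mul_nonneg hn hn) (by linarith : 0 ≤ Real.pi * x)]
  have inv_le : (1 - Real.exp (-9))⁻¹ ≤ 1.01 := by
    rw [inv_le_comm₀ (by linarith) (by norm_num)]
    norm_num
    linarith
  refine (hasSum_le term_le tail_sum geom).trans ?_
  nlinarith [Real.exp_pos (-4 * Real.pi * x)]

/-- The contribution of `n = ±1` to `xiKernel`. -/
noncomputable def leadingKernel (u : ℝ) : ℝ :=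
  2 * Real.exp (-Real.pi * Real.exp (2 * u) + u / 2)

lemma leadingKernel_pos (u : ℝ) : 0 < leadingKernel u := by
  unfold leadingKernel
  positivity

lemma abs_xiKernel_sub_leadingKernel_le {u : ℝ} (hu : 0 ≤ u) :
    |xiKernel u - leadingKernel u| ≤
      2.02 * Real.exp (-4 * Real.pi * Real.exp (2 * u) + u / 2) := by
  obtain ⟨sub_nonneg, sub_le⟩ := thetaTail_sub_le (Real.one_le_exp (by linarith : 0 ≤ 2 * u))
  have factor : xiKernel u - leadingKernel u =
      (thetaTail (Real.exp (2 * u)) - 2 * Real.exp (-Real.pi * Real.exp (2 * u))) *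
        Real.exp (u / 2) := by
    rw [xiKernel, leadingKernel, Real.exp_add]
    ring
  rw [factor, abs_of_nonneg (mul_nonneg sub_nonneg (Real.exp_pos _).le), Real.exp_add, ← mul_assoc]
  exact mul_le_mul_of_nonneg_right sub_le (Real.exp_pos _).le

lemma xiKernel_le {u : ℝ} (hu : 0 ≤ u) :
    xiKernel u ≤ 2.001 * Real.exp (-Real.pi * Real.exp (2 * u) + u / 2) := by
  have sub_le := (abs_le.mp (abs_xiKernel_sub_leadingKernel_le hu)).2
  have one_le_exp : 1 ≤ Real.exp (2 * u) := Real.one_le_exp (by linarith)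
  have remainder_le : Real.exp (-4 * Real.pi * Real.exp (2 * u) + u / 2) ≤
      Real.exp (-9) * Real.exp (-Real.pi * Real.exp (2 * u) + u / 2) := by
    rw [← Real.exp_add]
    exact Real.exp_le_exp.mpr (by nlinarith [Real.pi_gt_three])
  rw [leadingKernel] at sub_le
  nlinarith [exp_neg_nine_le, Real.exp_pos (-Real.pi * Real.exp (2 * u) + u / 2)]

lemma hasDerivAt_leadingKernel (u : ℝ) : HasDerivAt leadingKernel
    ((1 / 2 - 2 * Real.pi * Real.exp (2 * u)) * leadingKernel u) u := by
  have deriv_exponent : HasDerivAt (fun u ↦ -Real.pi * Real.exp (2 * u) + u / 2)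
      (-Real.pi * (Real.exp (2 * u) * 2) + 1 / 2) u :=
    ((hasDerivAt_exp_mul 2 u).const_mul _).add ((hasDerivAt_id u).div_const 2)
  refine (deriv_exponent.exp.const_mul 2).congr_deriv ?_
  rw [leadingKernel]
  ring

lemma abs_exp_sub_sum_le {x : ℝ} {n : ℕ} (hx : |x| / n.succ ≤ 1 / 2) :
    |Real.exp x - ∑ m ∈ Finset.range n, x ^ m / m.factorial| ≤ |x| ^ n / n.factorial * 2 := by
  have bound := Complex.exp_bound' (x := x) (n := n) (by simpa using hx)
  have cast_eq : Complex.exp x - ∑ m ∈ Finset.range n, (x : ℂ) ^ m / m.factorial =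
      ((Real.exp x - ∑ m ∈ Finset.range n, x ^ m / m.factorial : ℝ) : ℂ) := by
    push_cast
    rfl
  rwa [cast_eq, norm_real, norm_real, Real.norm_eq_abs, Real.norm_eq_abs] at bound

lemma abs_exp_neg_sub_le : |Real.exp (-3.1415926536) - 864278365 / 10 ^ 10 / 2| ≤ 1e-9 := by
  have taylor := abs_exp_sub_sum_le (x := -3.1415926536) (n := 22) (by norm_num [abs_of_neg])
  simp only [Finset.sum_range_succ, Finset.sum_range_zero, Nat.factorial] at taylor
  rw [abs_of_neg (by norm_num : (-3.1415926536 : ℝ) < 0), abs_le] at taylor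
  rw [abs_le]
  norm_num at taylor ⊢
  constructor <;> linarith

lemma abs_two_mul_exp_neg_pi_sub_le :
    |2 * Real.exp (-Real.pi) - 864278365 / 10 ^ 10| ≤ 5e-9 := by
  have exp_neg_le := abs_exp_neg_sub_le
  have pi_gt := Real.pi_gt_d20
  have pi_lt := Real.pi_lt_d20
  have factor : Real.exp (-Real.pi) =
      Real.exp (-3.1415926536) * Real.exp (3.1415926536 - Real.pi) := by
    rw [← Real.exp_add]
    ring_nf
  have one_le_correction : 1 ≤ Real.exp (3.1415926536 - Real.pi) :=
    Real.one_le_exp (by norm_num at *; linarith)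
  have correction_le : Real.exp (3.1415926536 - Real.pi) ≤ 1 + 1e-9 := by
    have le_inv : (1 : ℝ) - 1e-10 ≤ (Real.exp (3.1415926536 - Real.pi))⁻¹ := by
      rw [← Real.exp_neg]
      refine le_trans ?_ (Real.add_one_le_exp _)
      norm_num at *
      linarith
    exact ((le_inv_comm₀ (by norm_num) (Real.exp_pos _)).mp le_inv).trans (by norm_num)
  rw [factor]
  generalize Real.exp (3.1415926536 - Real.pi) = w at *
  generalize Real.exp (-3.1415926536) = v at *
  rw [abs_le] at exp_neg_le ⊢
  norm_num at *
  constructor <;> nlinarith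

lemma exp_neg_pi_le : Real.exp (-Real.pi) ≤ 0.043214 := by
  have h := (abs_le.mp abs_two_mul_exp_neg_pi_sub_le).2
  norm_num at h ⊢
  linarith

lemma leadingKernel_le {u : ℝ} (hu : 0 ≤ u) : leadingKernel u ≤ 0.09 := by
  have exp_le : Real.exp (-Real.pi * Real.exp (2 * u) + u / 2) ≤ Real.exp (-Real.pi) :=
    Real.exp_le_exp.mpr (by nlinarith [Real.pi_gt_three, Real.add_one_le_exp (2 * u)])
  rw [leadingKernel]
  calc 2 * Real.exp (-Real.pi * Real.exp (2 * u) + u / 2) ≤ 2 * 0.043214 := by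
        gcongr
        exact exp_le.trans exp_neg_pi_le
    _ ≤ 0.09 := by norm_num

/-- An approximation of `10 ^ 10 * leadingKernel` on `[0, 3 / 4]`, found numerically. -/
def kernelPoly : IntPoly :=
  [864278365, -4998281833, 9022562757, -76113065, -14353150362, 1910132012, 17731283398,
    11644043310, -61818979685, 117450061561, -276753008753, 476283576953, -460345370334,
    231059151450, -47627454727]

/-- The Taylor polynomial of degree `17` of `exp (2 u)`, multiplied by `17!`. -/
def expTaylorPoly : IntPoly :=
  (List.range 18).map fun n ↦ 2 ^ n * (Nat.factorial 17 / Nat.factorial n : ℕ)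

lemma eval_expTaylorPoly (x : ℝ) : expTaylorPoly.eval x / Nat.factorial 17 =
    ∑ m ∈ Finset.range 18, (2 * x) ^ m / (m.factorial : ℝ) := by
  rw [expTaylorPoly, IntPoly.eval_map_range, Finset.sum_div]
  refine Finset.sum_congr rfl fun m hm ↦ ?_
  have dvd : m.factorial ∣ Nat.factorial 17 :=
    Nat.factorial_dvd_factorial (Nat.le_of_lt_succ (Finset.mem_range.mp hm))
  rw [Int.cast_mul, Int.cast_natCast, Nat.cast_div dvd (by positivity), mul_pow]
  push_cast
  field_simp

lemma abs_exp_two_mul_sub_expTaylorPoly_le {x : ℝ} (hx0 : 0 ≤ x) (hx : x ≤ 3 / 4) :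
    |Real.exp (2 * x) - expTaylorPoly.eval x / Nat.factorial 17| ≤ 1e-12 := by
  have abs_le : |2 * x| ≤ 3 / 2 := by
    rw [abs_of_nonneg (by linarith)]
    linarith
  rw [eval_expTaylorPoly]
  refine (abs_exp_sub_sum_le (by norm_num at abs_le ⊢; linarith)).trans ?_
  calc |2 * x| ^ 18 / (Nat.factorial 18 : ℝ) * 2
      ≤ (3 / 2) ^ 18 / (Nat.factorial 18 : ℝ) * 2 := by gcongr
    _ ≤ 1e-12 := by norm_num [Nat.factorial]

/-- A common denominator of `1 / 2` and the coefficients of `2 π exp (2 u)`, with `π` rounded to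
twelve decimals and the exponential replaced by its Taylor polynomial. -/
def residualScale : ℤ := 2 * Nat.factorial 17 * 10 ^ 12

/-- The residual of `kernelPoly` in the differential equation
`k' = (1 / 2 - 2 π exp (2 u)) k` of `leadingKernel`, with denominators cleared. -/
def residualPoly : IntPoly :=
  (kernelPoly.derivative.smul residualScale).add
    ((kernelPoly.smul (-(Nat.factorial 17 * 10 ^ 12))).add
      ((expTaylorPoly.mul kernelPoly).smul (4 * 3141592653590)))

lemma eval_residualPoly (u : ℝ) : residualPoly.eval u / residualScale =
    kernelPoly.derivative.eval u -
      (1 / 2 - 2 * 3.141592653590 * (expTaylorPoly.eval u / Nat.factorial 17)) *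
        kernelPoly.eval u := by
  simp only [residualPoly, residualScale, IntPoly.eval_add, IntPoly.eval_smul, IntPoly.eval_mul]
  push_cast
  field_simp
  ring

set_option maxRecDepth 100000 in
lemma residualPoly_shiftsBoundedBy :
    IntPoly.shiftsBoundedBy (780 * residualScale * 256 ^ 31) 32
      (GaussPoly.homogComp 256 ([3, 2 * 3], []) residualPoly).1 = true := by
  decide +kernel

lemma abs_eval_residualPoly_le {u : ℝ} (hu0 : 0 ≤ u) (hu : u < 3 / 4) :
    |residualPoly.eval u / residualScale| ≤ 780 := by
  have scale_pos : (0 : ℝ) < residualScale := by norm_num [residualScale, Nat.factorial]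
  have bound := IntPoly.abs_eval_le_of_shiftsBoundedBy (by norm_num) (by norm_num)
    residualPoly_shiftsBoundedBy hu0 (by norm_num; linarith)
  rw [show residualPoly.length = 32 by decide +kernel] at bound
  rw [abs_div, abs_of_pos scale_pos, div_le_iff₀ scale_pos]
  refine le_of_mul_le_mul_left ?_ (by positivity : (0 : ℝ) < 256 ^ 32)
  push_cast at bound
  linarith

lemma exp_two_mul_le_five {u : ℝ} (hu : u ≤ 3 / 4) : Real.exp (2 * u) ≤ 5 := by
  have exp_half_sq : Real.exp (1 / 2) ^ 2 = Real.exp 1 := by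
    rw [← Real.exp_nat_mul]
    norm_num
  have exp_one_lt : Real.exp 1 < 2.72 := Real.exp_one_lt_d9.trans (by norm_num)
  have exp_half_le : Real.exp (1 / 2) ≤ 1.7 :=
    le_of_sq_le_sq (by rw [exp_half_sq]; norm_num at *; linarith) (by norm_num)
  calc Real.exp (2 * u) ≤ Real.exp (1 + 1 / 2) := Real.exp_le_exp.mpr (by linarith)
    _ = Real.exp 1 * Real.exp (1 / 2) := Real.exp_add _ _
    _ ≤ 2.72 * 1.7 := by gcongr
    _ ≤ 5 := by norm_num

lemma abs_two_pi_mul_exp_sub_le {u : ℝ} (hu0 : 0 ≤ u) (hu : u ≤ 3 / 4) :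
    |2 * Real.pi * Real.exp (2 * u) -
      2 * 3.141592653590 * (expTaylorPoly.eval u / Nat.factorial 17)| ≤ 2e-11 := by
  have taylor := abs_exp_two_mul_sub_expTaylorPoly_le hu0 hu
  have exp_le := exp_two_mul_le_five hu
  have exp_pos := Real.exp_pos (2 * u)
  have pi_err : |Real.pi - 3.141592653590| ≤ 1e-12 := by
    rw [abs_le]
    constructor <;> norm_num <;> linarith [Real.pi_gt_d20, Real.pi_lt_d20]
  set E := Real.exp (2 * u)
  set T := expTaylorPoly.eval u / Nat.factorial 17
  calc |2 * Real.pi * E - 2 * 3.141592653590 * T|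
      = |2 * (Real.pi - 3.141592653590) * E + 2 * 3.141592653590 * (E - T)| := by ring_nf
    _ ≤ 2 * |Real.pi - 3.141592653590| * |E| + 2 * 3.141592653590 * |E - T| := by
        refine (abs_add_le _ _).trans_eq ?_
        rw [abs_mul, abs_mul, abs_mul, abs_two, abs_of_pos (by norm_num : (0 : ℝ) <
          2 * 3.141592653590)]
    _ ≤ 2 * 1e-12 * 5 + 2 * 3.141592653590 * 1e-12 := by
        rw [abs_of_pos exp_pos]
        gcongr
    _ ≤ 2e-11 := by norm_num

/-- The rescaling of `kernelPoly` that approximates `leadingKernel`. -/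
noncomputable def kernelApprox (u : ℝ) : ℝ := kernelPoly.eval u / 10 ^ 10

lemma abs_kernelApprox_le {u : ℝ} (hu0 : 0 ≤ u) (hu1 : u ≤ 1) : |kernelApprox u| ≤ 200 := by
  have sumAbs_le : (kernelPoly.sumAbs : ℝ) ≤ 200 * 10 ^ 10 := by
    exact_mod_cast (by decide +kernel : kernelPoly.sumAbs ≤ 200 * 10 ^ 10)
  rw [kernelApprox, abs_div, abs_of_pos (by positivity : (0 : ℝ) < 10 ^ 10),
    div_le_iff₀ (by positivity)]
  exact (kernelPoly.abs_eval_le_sumAbs hu0 hu1).trans sumAbs_le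

lemma hasDerivAt_kernelApprox (u : ℝ) :
    HasDerivAt kernelApprox (kernelPoly.derivative.eval u / 10 ^ 10) u :=
  (kernelPoly.hasDerivAt_eval u).div_const _

lemma abs_kernelApprox_residual_lt {u : ℝ} (hu0 : 0 ≤ u) (hu : u < 3 / 4) :
    |kernelPoly.derivative.eval u / 10 ^ 10 -
      (1 / 2 - 2 * Real.pi * Real.exp (2 * u)) * kernelApprox u| < 9e-8 := by
  have coeff_err := abs_two_pi_mul_exp_sub_le hu0 hu.le
  have residual_le := abs_eval_residualPoly_le hu0 hu
  rw [eval_residualPoly] at residual_le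
  have split : kernelPoly.derivative.eval u / 10 ^ 10 -
      (1 / 2 - 2 * Real.pi * Real.exp (2 * u)) * kernelApprox u =
      (kernelPoly.derivative.eval u -
        (1 / 2 - 2 * 3.141592653590 * (expTaylorPoly.eval u / Nat.factorial 17)) *
          kernelPoly.eval u) / 10 ^ 10 +
      (2 * Real.pi * Real.exp (2 * u) -
        2 * 3.141592653590 * (expTaylorPoly.eval u / Nat.factorial 17)) * kernelApprox u := by
    rw [kernelApprox]
    ring
  rw [split]
  refine (abs_add_le _ _).trans_lt ?_
  rw [abs_div, abs_mul, abs_of_pos (by norm_num : (0 : ℝ) < 10 ^ 10)]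
  calc _ ≤ (780 : ℝ) / 10 ^ 10 + 2e-11 * 200 := by
        gcongr
        exact abs_kernelApprox_le hu0 (by linarith)
    _ < 9e-8 := by norm_num

lemma le_add_mul_of_deriv_sub_mul_lt {f f' c : ℝ → ℝ} {δ ε T : ℝ}
    (hf : ∀ x, HasDerivAt f (f' x) x) (hc : ∀ x ∈ Ico 0 T, c x ≤ 0) (hδ : 0 ≤ δ) (hε : 0 ≤ ε)
    (h0 : f 0 ≤ δ) (hlt : ∀ x ∈ Ico 0 T, f' x - c x * f x < ε) {u : ℝ} (hu : u ∈ Icc 0 T) :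
    f u ≤ δ + ε * u := by
  have deriv_barrier (x : ℝ) : HasDerivAt (fun u ↦ δ + ε * u) ε x := by
    simpa using ((hasDerivAt_id x).const_mul ε).const_add δ
  refine image_le_of_deriv_right_lt_deriv_boundary'
    (fun x _ ↦ (hf x).continuousAt.continuousWithinAt) (fun x _ ↦ (hf x).hasDerivWithinAt)
    (by simpa using h0) (fun x _ ↦ (deriv_barrier x).continuousAt.continuousWithinAt)
    (fun x _ ↦ (deriv_barrier x).hasDerivWithinAt) (fun x hx touch ↦ ?_) hu
  have damping : c x * f x ≤ 0 := by
    rw [touch]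
    exact mul_nonpos_of_nonpos_of_nonneg (hc x hx) (by have := hx.1; positivity)
  linarith [hlt x hx]

lemma abs_kernelApprox_sub_leadingKernel_le {u : ℝ} (hu : u ∈ Icc (0 : ℝ) (3 / 4)) :
    |kernelApprox u - leadingKernel u| ≤ 7.3e-8 := by
  set c : ℝ → ℝ := fun x ↦ 1 / 2 - 2 * Real.pi * Real.exp (2 * x)
  have c_nonpos : ∀ x ∈ Ico (0 : ℝ) (3 / 4), c x ≤ 0 := fun x hx ↦ by
    have : 1 ≤ Real.exp (2 * x) := Real.one_le_exp (by linarith [hx.1])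
    simp only [c]
    nlinarith [Real.pi_gt_three]
  have deriv_sub (x : ℝ) : HasDerivAt (fun u ↦ kernelApprox u - leadingKernel u)
      (kernelPoly.derivative.eval x / 10 ^ 10 - c x * leadingKernel x) x :=
    (hasDerivAt_kernelApprox x).sub (hasDerivAt_leadingKernel x)
  have at_zero : |kernelApprox 0 - leadingKernel 0| ≤ 5e-9 := by
    rw [abs_sub_comm]
    simpa [kernelApprox, leadingKernel, kernelPoly] using abs_two_mul_exp_neg_pi_sub_le
  have residual (x : ℝ) (hx : x ∈ Ico (0 : ℝ) (3 / 4)) :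
      |kernelPoly.derivative.eval x / 10 ^ 10 - c x * leadingKernel x -
        c x * (kernelApprox x - leadingKernel x)| < 9e-8 := by
    have h := abs_kernelApprox_residual_lt hx.1 hx.2
    rwa [show ∀ p k e : ℝ, p - c x * e - c x * (k - e) = p - c x * k by intros; ring]
  have upper := le_add_mul_of_deriv_sub_mul_lt (δ := 5e-9) (ε := 9e-8) deriv_sub c_nonpos
    (by norm_num) (by norm_num) (abs_le.mp at_zero).2
    (fun x hx ↦ (abs_lt.mp (residual x hx)).2) hu
  have lower := le_add_mul_of_deriv_sub_mul_lt (δ := 5e-9) (ε := 9e-8)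
    (fun x ↦ (deriv_sub x).neg) c_nonpos (by norm_num) (by norm_num)
    (neg_le.mp (abs_le.mp at_zero).1)
    (fun x hx ↦ by simp only [Pi.neg_apply]; linarith [(abs_lt.mp (residual x hx)).1]) hu
  have := hu.2
  simp only [Pi.neg_apply] at lower
  rw [abs_le]
  constructor <;> norm_num at * <;> linarith

/-! ### Polynomial approximation of the completed zeta function -/

/-- The moment `∫₀^{3/4} p(u) u ^ m du` of an integer polynomial. -/
def IntPoly.moment : IntPoly → ℕ → ℚ
  | [], _ => 0
  | a :: p, m => a * ((3 / 4) ^ (m + 1) / (m + 1)) + IntPoly.moment p (m + 1)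

lemma IntPoly.integral_eval_mul_pow (p : IntPoly) (m : ℕ) :
    ∫ u in (0 : ℝ)..(3 / 4), p.eval u * u ^ m = (p.moment m : ℝ) := by
  induction p generalizing m with
  | nil => simp [moment]
  | cons a p ih =>
    have expand (u : ℝ) : eval (a :: p) u * u ^ m = a * u ^ m + eval p u * u ^ (m + 1) := by
      rw [eval_cons]
      ring
    have continuous_eval := continuous_eval p
    simp only [expand]
    rw [intervalIntegral.integral_add, intervalIntegral.integral_const_mul, integral_pow, ih,
      moment]
    · push_cast
      simp
    · exact Continuous.intervalIntegrable (by fun_prop) _ _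
    · exact Continuous.intervalIntegrable (by fun_prop) _ _

/-- A common denominator of the Taylor coefficients
`2 / (2 n)! * ∫₀^{3/4} kernelApprox(u) u ^ (2 n) du` for `n < 19`. -/
def zetaPolyDenom : ℤ :=
  11655146884054539422344342970995827469840428887831684385105452485050368000000000000000000

/-- The numerators over `zetaPolyDenom` of the Taylor coefficients
`2 / (2 n)! * ∫₀^{3/4} kernelApprox(u) u ^ (2 n) du` for `n < 19`. -/
def zetaPoly : IntPoly := [
  268454136272043813025041089218770998397691010605767962832224564639379539015761920000000,
  2882012857512971572865520694634934512401647530573375926062687774690863638118400000000,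
  19398046666585440356898996839420110911403680913237376218862574521751888199680000000,
  92572590877923228257822481418757351742185457623052958550311843263330385920000000,
  334556625759100991908271688977583461067526497514281137828895500443582464000000,
  952140577752508525756471615177388290727996151066602534261012910550548480000,
  2187593956399533419085186187955654728432850493540519807101392367124480000,
  4127710309112853662039881643439543417497213473722699603906951905280000,
  6480623398210707072247633246690416553527871184684226548324106240000,
  8559942029411121759598375974647308191244965567215078555516928000,
  9606197801290742080724506087248055241809346914511257967001600,
  9242890226504803486983363105519647853437373998081192755200,
  7689852351153702119949586994303283722761760957005824000,
  5575819774779811565508470898066523118099256626380800,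
  3549458716465890855729258937471452085260417761280,
  1997208621791054104610515943140840391926874112,
  999566245390594235216704241800691357079552,
  447540957798793870044274987966433549280,
  180217030811500835708061218156857881]

/-- The polynomial approximation of `z ↦ completedRiemannZeta₀ (1 / 2 + z)`. -/
noncomputable def zetaApprox (z : ℂ) : ℂ := zetaPoly.eval (z ^ 2) / zetaPolyDenom

lemma zetaPolyDenom_pos : 0 < zetaPolyDenom := by
  unfold zetaPolyDenom
  norm_num

set_option maxRecDepth 100000 in
lemma zetaPoly_getD_eq_moment : ∀ n : Fin 19, ((zetaPoly.getD n 0 : ℤ) : ℚ) =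
    zetaPolyDenom * (2 / ((2 * (n : ℕ)).factorial : ℕ) * kernelPoly.moment (2 * n) / 10 ^ 10) := by
  decide +kernel

lemma eval_zetaPoly (x : ℂ) :
    zetaPoly.eval x = ∑ n ∈ Finset.range 19, ((zetaPoly.getD n 0 : ℤ) : ℂ) * x ^ n :=
  IntPoly.eval_map_range (fun n ↦ zetaPoly.getD n 0) 19 x

/-- The Taylor polynomial of degree `2 N - 2` of `2 cosh w`. -/
noncomputable def twoCoshTaylor (N : ℕ) (w : ℂ) : ℂ :=
  ∑ n ∈ Finset.range N, 2 * w ^ (2 * n) / ((2 * n).factorial : ℂ)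

lemma sum_add_sum_neg_eq_twoCoshTaylor (w : ℂ) (N : ℕ) :
    ∑ m ∈ Finset.range (2 * N), w ^ m / (m.factorial : ℂ) +
      ∑ m ∈ Finset.range (2 * N), (-w) ^ m / (m.factorial : ℂ) = twoCoshTaylor N w := by
  rw [twoCoshTaylor, ← Finset.sum_add_distrib]
  induction N with
  | zero => simp
  | succ N ih =>
    rw [show 2 * (N + 1) = 2 * N + 1 + 1 by ring, Finset.sum_range_succ, Finset.sum_range_succ, ih,
      Finset.sum_range_succ, Even.neg_pow (even_two_mul N),
      Odd.neg_pow (odd_two_mul_add_one N)]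
    ring

lemma norm_cexp_add_cexp_neg_sub_twoCoshTaylor_le {w : ℂ} (hw : ‖w‖ ≤ 9.9) :
    ‖cexp w + cexp (-w) - twoCoshTaylor 19 w‖ ≤ 6e-7 := by
  have exp_err (v : ℂ) (hv : ‖v‖ ≤ 9.9) :
      ‖cexp v - ∑ m ∈ Finset.range (2 * 19), v ^ m / (m.factorial : ℂ)‖ ≤ 3e-7 := by
    refine (Complex.exp_bound' (by push_cast; linarith)).trans ?_
    calc ‖v‖ ^ 38 / (Nat.factorial 38 : ℝ) * 2 ≤ 9.9 ^ 38 / (Nat.factorial 38 : ℝ) * 2 := by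
          gcongr
      _ ≤ 3e-7 := by norm_num [Nat.factorial]
  rw [← sum_add_sum_neg_eq_twoCoshTaylor, add_sub_add_comm]
  exact (norm_add_le_of_le (exp_err w hw) (exp_err (-w) (by rwa [norm_neg]))).trans (by norm_num)

lemma continuous_kernelApprox : Continuous kernelApprox :=
  kernelPoly.continuous_eval.div_const _

lemma continuous_kernelApprox_mul_twoCoshTaylor (z : ℂ) :
    Continuous fun u : ℝ ↦ (kernelApprox u : ℂ) * twoCoshTaylor 19 (z * u) := by
  have := continuous_kernelApprox
  unfold twoCoshTaylor
  fun_prop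

lemma integral_kernelApprox_mul_twoCoshTaylor (z : ℂ) :
    ∫ u in (0 : ℝ)..(3 / 4), (kernelApprox u : ℂ) * twoCoshTaylor 19 (z * u) = zetaApprox z := by
  have expand (u : ℝ) : (kernelApprox u : ℂ) * twoCoshTaylor 19 (z * u) =
      ∑ n ∈ Finset.range 19, 2 * z ^ (2 * n) / ((2 * n).factorial : ℂ) / 10 ^ 10 *
        ((kernelPoly.eval u * u ^ (2 * n) : ℝ) : ℂ) := by
    rw [kernelApprox, twoCoshTaylor, Finset.mul_sum]
    refine Finset.sum_congr rfl fun n _ ↦ ?_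
    rw [mul_pow]
    push_cast
    ring
  have denom_ne : (zetaPolyDenom : ℂ) ≠ 0 := by exact_mod_cast zetaPolyDenom_pos.ne'
  have continuous_eval := kernelPoly.continuous_eval
  simp only [expand]
  rw [intervalIntegral.integral_finsetSum
    fun n _ ↦ Continuous.intervalIntegrable (by fun_prop) _ _, zetaApprox, eval_zetaPoly,
    Finset.sum_div]
  refine Finset.sum_congr rfl fun n hn ↦ ?_
  have coeff := congrArg (fun q : ℚ ↦ (q : ℂ)) (zetaPoly_getD_eq_moment ⟨n, Finset.mem_range.mp hn⟩)
  push_cast at coeff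
  rw [intervalIntegral.integral_const_mul, intervalIntegral.integral_ofReal,
    IntPoly.integral_eval_mul_pow, coeff, ← pow_mul]
  push_cast
  field_simp

lemma integrableOn_xiKernel_mul_cexp_add_cexp_neg (z : ℂ) :
    IntegrableOn (fun u : ℝ ↦ (xiKernel u : ℂ) * (cexp (z * u) + cexp (-(z * u)))) (Ioi 0) := by
  refine ((integrableOn_xiKernel_mul_cexp z).add (integrableOn_xiKernel_mul_cexp (-z))).congr_fun
    (fun u _ ↦ ?_) measurableSet_Ioi
  simp only [Pi.add_apply, neg_mul, mul_add]

lemma norm_xiKernel_mul_cexp_add_cexp_neg_le_exp {z : ℂ} (hz : |z.re| ≤ 3) {u : ℝ} (hu : 0 ≤ u) :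
    ‖(xiKernel u : ℂ) * (cexp (z * u) + cexp (-(z * u)))‖ ≤
      4.002 * Real.exp (-Real.pi * Real.exp (2 * u) + 3.5 * u) := by
  calc ‖(xiKernel u : ℂ) * (cexp (z * u) + cexp (-(z * u)))‖
      ≤ xiKernel u * (2 * Real.exp (3 * u)) := norm_xiKernel_mul_cexp_add_cexp_neg_le hz hu
    _ ≤ 2.001 * Real.exp (-Real.pi * Real.exp (2 * u) + u / 2) * (2 * Real.exp (3 * u)) := by
        gcongr
        exact xiKernel_le hu
    _ = 4.002 * (Real.exp (-Real.pi * Real.exp (2 * u) + u / 2) * Real.exp (3 * u)) := by ring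
    _ = 4.002 * Real.exp (-Real.pi * Real.exp (2 * u) + 3.5 * u) := by
        rw [← Real.exp_add]
        ring_nf

lemma integral_exp_neg_mul_Ioi {a : ℝ} (ha : 0 < a) (c : ℝ) :
    ∫ x in Ioi c, Real.exp (-a * x) = Real.exp (-a * c) / a := by
  rw [integral_exp_mul_Ioi (by linarith)]
  field_simp

lemma norm_completedRiemannZeta₀_le_one {z : ℂ} (hz : |z.re| ≤ 3) :
    ‖completedRiemannZeta₀ (1 / 2 + z)‖ ≤ 1 := by
  rw [completedRiemannZeta₀_eq_integral]
  have integrable_exp := integrableOn_exp_mul_Ioi (a := -2) (by norm_num) 0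
  calc _ ≤ ∫ u in Ioi (0 : ℝ), 0.4 * Real.exp (-2 * u) := by
        refine norm_integral_le_of_norm_le (integrable_exp.const_mul 0.4) ?_
        filter_upwards [ae_restrict_mem measurableSet_Ioi] with u hu
        have hu : 0 < u := hu
        refine (norm_xiKernel_mul_cexp_add_cexp_neg_le_exp hz hu.le).trans ?_
        have exp_le : Real.exp (-Real.pi * Real.exp (2 * u) + 3.5 * u) ≤
            Real.exp (-Real.pi) * Real.exp (-2 * u) := by
          rw [← Real.exp_add]
          exact Real.exp_le_exp.mpr (by nlinarith [Real.pi_gt_three, Real.add_one_le_exp (2 * u)])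
        nlinarith [Real.exp_pos (-2 * u), exp_neg_pi_le]
    _ ≤ 1 := by
        rw [integral_const_mul, integral_exp_neg_mul_Ioi (by norm_num)]
        norm_num

lemma le_exp_three_halves : 4.48 ≤ Real.exp (3 / 2) := by
  have exp_one_gt := Real.exp_one_gt_d9
  have exp_half_sq : Real.exp (1 / 2) ^ 2 = Real.exp 1 := by
    rw [← Real.exp_nat_mul]
    norm_num
  have exp_half_ge : 1.6487 ≤ Real.exp (1 / 2) :=
    le_of_sq_le_sq (by rw [exp_half_sq]; norm_num at *; linarith) (Real.exp_pos _).le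
  rw [show (3 / 2 : ℝ) = 1 + 1 / 2 by norm_num, Real.exp_add]
  nlinarith

lemma neg_pi_mul_exp_add_le {u : ℝ} (hu : 3 / 4 ≤ u) :
    -Real.pi * Real.exp (2 * u) + 3.5 * u ≤ 7 + -24 * u := by
  have exp_ge : 4.48 * (2 * u - 1 / 2) ≤ Real.exp (2 * u) := by
    rw [show 2 * u = 3 / 2 + (2 * u - 3 / 2) by ring, Real.exp_add]
    exact mul_le_mul le_exp_three_halves (by linarith [Real.add_one_le_exp (2 * u - 3 / 2)])
      (by linarith) (Real.exp_pos _).le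
  have pi_mul_exp_ge : 3.14 * (4.48 * (2 * u - 1 / 2)) ≤ Real.pi * Real.exp (2 * u) :=
    mul_le_mul Real.pi_gt_d2.le exp_ge (by linarith) Real.pi_pos.le
  linarith

lemma norm_integral_Ioi_three_quarters_le {z : ℂ} (hz : |z.re| ≤ 3) :
    ‖∫ u in Ioi (3 / 4 : ℝ), (xiKernel u : ℂ) * (cexp (z * u) + cexp (-(z * u)))‖ ≤ 3e-6 := by
  have integrable_exp := integrableOn_exp_mul_Ioi (a := -24) (by norm_num) (3 / 4)
  have exp_neg_eleven_le : Real.exp (-11) ≤ ((2.718 : ℝ) ^ 11)⁻¹ := by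
    rw [Real.exp_neg, show (11 : ℝ) = (11 : ℕ) * 1 by norm_num, Real.exp_nat_mul]
    gcongr
    linarith [Real.exp_one_gt_d9]
  calc _ ≤ ∫ u in Ioi (3 / 4 : ℝ), 4.002 * Real.exp 7 * Real.exp (-24 * u) := by
        refine norm_integral_le_of_norm_le (integrable_exp.const_mul (4.002 * Real.exp 7)) ?_
        filter_upwards [ae_restrict_mem measurableSet_Ioi] with u hu
        have hu : 3 / 4 < u := hu
        refine (norm_xiKernel_mul_cexp_add_cexp_neg_le_exp hz (by linarith)).trans ?_
        rw [mul_assoc, ← Real.exp_add]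
        exact mul_le_mul_of_nonneg_left
          (Real.exp_le_exp.mpr (neg_pi_mul_exp_add_le hu.le)) (by norm_num)
    _ = 4.002 / 24 * Real.exp (-11) := by
        rw [integral_const_mul, integral_exp_neg_mul_Ioi (by norm_num),
          show (-11 : ℝ) = 7 + -24 * (3 / 4) by norm_num, Real.exp_add]
        ring
    _ ≤ 4.002 / 24 * ((2.718 : ℝ) ^ 11)⁻¹ := by gcongr
    _ ≤ 3e-6 := by norm_num

lemma two_mul_exp_three_mul_le {u : ℝ} (hu : u ≤ 3 / 4) : 2 * Real.exp (3 * u) ≤ 19 := by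
  have exp_one_lt : Real.exp 1 < 2.7182818286 := Real.exp_one_lt_d9
  have exp_quarter_pow : Real.exp (1 / 4) ^ 4 = Real.exp 1 := by
    rw [← Real.exp_nat_mul]
    norm_num
  have exp_quarter_le : Real.exp (1 / 4) ≤ 1.2841 :=
    le_of_pow_le_pow_left₀ (n := 4) (by norm_num) (by norm_num)
      (by rw [exp_quarter_pow]; norm_num at *; linarith)
  calc 2 * Real.exp (3 * u) ≤ 2 * Real.exp ((2 : ℕ) * 1 + 1 / 4) := by
        gcongr
        norm_num
        linarith
    _ = 2 * (Real.exp 1 ^ 2 * Real.exp (1 / 4)) := by rw [Real.exp_add, Real.exp_nat_mul]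
    _ ≤ 2 * (2.7182818286 ^ 2 * 1.2841) := by gcongr
    _ ≤ 19 := by norm_num

lemma exp_neg_four_pi_mul_exp_mul_le {u : ℝ} (hu : 0 ≤ u) :
    2.02 * Real.exp (-4 * Real.pi * Real.exp (2 * u) + u / 2) * (2 * Real.exp (3 * u)) ≤
      1.414e-5 * Real.exp (-21 * u) := by
  have exp_le : Real.exp (-4 * Real.pi * Real.exp (2 * u) + u / 2) * Real.exp (3 * u) ≤
      Real.exp (-Real.pi) ^ 4 * Real.exp (-21 * u) := by
    rw [← Real.exp_nat_mul, ← Real.exp_add, ← Real.exp_add]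
    refine Real.exp_le_exp.mpr ?_
    push_cast
    nlinarith [Real.pi_gt_d2, Real.add_one_le_exp (2 * u)]
  have exp_neg_pi_le := exp_neg_pi_le
  calc _ = 4.04 * (Real.exp (-4 * Real.pi * Real.exp (2 * u) + u / 2) * Real.exp (3 * u)) := by
        ring
    _ ≤ 4.04 * (0.043214 ^ 4 * Real.exp (-21 * u)) := by
        grw [exp_le, exp_neg_pi_le]
    _ ≤ 1.414e-5 * Real.exp (-21 * u) := by
        rw [← mul_assoc]
        gcongr
        norm_num

lemma abs_kernelApprox_le_of_mem_Icc {u : ℝ} (hu : u ∈ Icc (0 : ℝ) (3 / 4)) :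
    |kernelApprox u| ≤ 0.1 := by
  have err := abs_kernelApprox_sub_leadingKernel_le hu
  have pos := leadingKernel_pos u
  have le := leadingKernel_le hu.1
  rw [abs_le] at err ⊢
  norm_num at *
  constructor <;> linarith

lemma norm_integrand_sub_approx_le {z : ℂ} (hre : |z.re| ≤ 3) (hnorm : ‖z‖ ≤ 13.2) {u : ℝ}
    (hu : u ∈ Icc (0 : ℝ) (3 / 4)) :
    ‖(xiKernel u : ℂ) * (cexp (z * u) + cexp (-(z * u))) -
        kernelApprox u * twoCoshTaylor 19 (z * u)‖ ≤
      1.414e-5 * Real.exp (-21 * u) + 1.46e-6 := by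
  have norm_mul_le : ‖z * u‖ ≤ 9.9 := by
    rw [norm_mul, norm_real, Real.norm_of_nonneg hu.1]
    calc ‖z‖ * u ≤ 13.2 * (3 / 4) := mul_le_mul hnorm hu.2 hu.1 (by norm_num)
      _ ≤ 9.9 := by norm_num
  have taylor_err := norm_cexp_add_cexp_neg_sub_twoCoshTaylor_le norm_mul_le
  have cosh_le := norm_cexp_add_cexp_neg_le hre hu.1
  set C := cexp (z * u) + cexp (-(z * u))
  set T := twoCoshTaylor 19 (z * u)
  have theta_part : ‖((xiKernel u - leadingKernel u : ℝ) : ℂ) * C‖ ≤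
      1.414e-5 * Real.exp (-21 * u) := by
    rw [norm_mul, norm_real, Real.norm_eq_abs]
    refine le_trans ?_ (exp_neg_four_pi_mul_exp_mul_le hu.1)
    gcongr
    exact abs_xiKernel_sub_leadingKernel_le hu.1
  have kernel_part : ‖((kernelApprox u - leadingKernel u : ℝ) : ℂ) * C‖ ≤ 7.3e-8 * 19 := by
    rw [norm_mul, norm_real, Real.norm_eq_abs]
    gcongr
    · exact abs_kernelApprox_sub_leadingKernel_le hu
    · exact cosh_le.trans (two_mul_exp_three_mul_le hu.2)
  have taylor_part : ‖(kernelApprox u : ℂ) * (C - T)‖ ≤ 0.1 * 6e-7 := by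
    rw [norm_mul, norm_real, Real.norm_eq_abs]
    gcongr
    exact abs_kernelApprox_le_of_mem_Icc hu
  have split : (xiKernel u : ℂ) * C - kernelApprox u * T =
      ((xiKernel u - leadingKernel u : ℝ) : ℂ) * C -
        ((kernelApprox u - leadingKernel u : ℝ) : ℂ) * C + kernelApprox u * (C - T) := by
    push_cast
    ring
  rw [split]
  refine (norm_add_le_of_le (norm_sub_le_of_le theta_part kernel_part) taylor_part).trans ?_
  norm_num
  linarith

lemma integral_exp_add_const_Ioc_le :
    ∫ u in Ioc (0 : ℝ) (3 / 4), (1.414e-5 * Real.exp (-21 * u) + 1.46e-6) ≤ 3e-6 := by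
  have integrable_exp := integrableOn_exp_mul_Ioi (a := -21) (by norm_num) 0
  have integral_exp_le : ∫ u in Ioc (0 : ℝ) (3 / 4), Real.exp (-21 * u) ≤ 1 / 21 := by
    refine (setIntegral_mono_set integrable_exp (.of_forall fun u ↦ (Real.exp_pos _).le)
      Ioc_subset_Ioi_self.eventuallyLE).trans ?_
    rw [integral_exp_neg_mul_Ioi (by norm_num)]
    norm_num
  rw [integral_add ((integrable_exp.mono_set Ioc_subset_Ioi_self).const_mul _)
    (integrableOn_const (by simp)), integral_const_mul, setIntegral_const]
  norm_num at integral_exp_le ⊢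
  linarith

theorem norm_completedRiemannZeta₀_sub_zetaApprox_le {z : ℂ} (hre : |z.re| ≤ 3)
    (hnorm : ‖z‖ ≤ 13.2) : ‖completedRiemannZeta₀ (1 / 2 + z) - zetaApprox z‖ ≤ 6e-6 := by
  have zero_le : (0 : ℝ) ≤ 3 / 4 := by norm_num
  have integrable := integrableOn_xiKernel_mul_cexp_add_cexp_neg z
  have integrable_head :=
    integrable.mono_set (Ioc_subset_Ioi_self : Ioc (0 : ℝ) (3 / 4) ⊆ Ioi 0)
  have integrable_tail := integrable.mono_set (Ioi_subset_Ioi zero_le)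
  have integrable_approx : IntegrableOn
      (fun u : ℝ ↦ (kernelApprox u : ℂ) * twoCoshTaylor 19 (z * u)) (Ioc 0 (3 / 4)) :=
    (continuous_kernelApprox_mul_twoCoshTaylor z).integrableOn_Ioc
  rw [completedRiemannZeta₀_eq_integral, ← integral_kernelApprox_mul_twoCoshTaylor,
    intervalIntegral.integral_of_le zero_le, ← Ioc_union_Ioi_eq_Ioi zero_le,
    setIntegral_union (Ioc_disjoint_Ioi le_rfl) measurableSet_Ioi integrable_head integrable_tail,
    add_sub_right_comm, ← integral_sub integrable_head integrable_approx]
  have majorant_integrable : IntegrableOn (fun u : ℝ ↦ 1.414e-5 * Real.exp (-21 * u) + 1.46e-6)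
      (Ioc 0 (3 / 4)) := Continuous.integrableOn_Ioc (by fun_prop)
  have head_le := (norm_integral_le_of_norm_le majorant_integrable
    ((ae_restrict_mem measurableSet_Ioc).mono fun u hu ↦
      norm_integrand_sub_approx_le hre hnorm (Ioc_subset_Icc_self hu))).trans
    integral_exp_add_const_Ioc_le
  exact (norm_add_le_of_le head_le (norm_integral_Ioi_three_quarters_le hre)).trans (by norm_num)

/-! ### Polynomial approximation of `f₂` -/

/-- The numerator of a decimal approximation of `A = π / 3 - 1`. -/
def approxANumer : ℤ := 4719755119659774

/-- The denominator of a decimal approximation of `A = π / 3 - 1`. -/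
def approxADenom : ℤ := 10 ^ 17

/-- A decimal approximation of `A = π / 3 - 1`. -/
noncomputable def approxA : ℂ := approxANumer / approxADenom

/-- The polynomial approximation of `χ` obtained from that of the completed zeta function. -/
noncomputable def chiApprox (s : ℂ) : ℂ := s * (s - 1) * zetaApprox (s - 1 / 2) + 1

/-- The polynomial approximation of `f2Bracket`. -/
noncomputable def f2BracketApprox (s : ℂ) : ℂ :=
  (approxA * s + 3) * (s - 1) ^ 2 * chiApprox (s + 2) - 2 * (s - 1) * (s - 3) * chiApprox (s + 1) -
    (s + 2) * (s - 3) * chiApprox s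

/-- The polynomial approximation of `f2Denom`. -/
noncomputable def f2DenomApprox (s : ℂ) : ℂ := chiApprox (s + 2) * (approxA * s + 3)

lemma norm_A_sub_approxA_le : ‖A - approxA‖ ≤ 1e-15 := by
  have approxA_eq : approxA = ((4719755119659774 / 10 ^ 17 : ℝ) : ℂ) := by
    norm_num [approxA, approxANumer, approxADenom]
  rw [A_eq_ofReal, approxA_eq, ← ofReal_sub, norm_real, Real.norm_eq_abs, abs_le]
  have pi_gt := Real.pi_gt_d20
  have pi_lt := Real.pi_lt_d20
  constructor <;> norm_num at * <;> linarith

lemma norm_approxA_mul_add_three_le (s : ℂ) : ‖approxA * s + 3‖ ≤ 3 + 0.0472 * ‖s‖ := by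
  have norm_approxA_le : ‖approxA‖ ≤ 0.0472 := by
    norm_num [approxA, approxANumer, approxADenom]
  calc ‖approxA * s + 3‖ ≤ ‖approxA‖ * ‖s‖ + 3 := by
        simpa using norm_add_le (approxA * s) 3
    _ ≤ 3 + 0.0472 * ‖s‖ := by
        rw [add_comm]
        gcongr

section ChiApprox

variable {s : ℂ}

lemma abs_re_sub_half_le (hre : s.re ∈ Icc (-1.25) 3.25) : |(s - 1 / 2).re| ≤ 2.75 := by
  have re_eq : (s - 1 / 2).re = s.re - 1 / 2 := by simp
  rw [re_eq, abs_le]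
  constructor <;> linarith [hre.1, hre.2]

lemma norm_sub_half_le (hre : s.re ∈ Icc (-1.25) 3.25) (him : |s.im| ≤ 12.8) :
    ‖s - 1 / 2‖ ≤ 13.2 := by
  have im_eq : (s - 1 / 2).im = s.im := by simp
  refine le_of_sq_le_sq ?_ (by norm_num)
  calc ‖s - 1 / 2‖ ^ 2 = |(s - 1 / 2).re| ^ 2 + |s.im| ^ 2 := by
        rw [← normSq_eq_norm_sq, normSq_apply, im_eq, sq_abs, sq_abs, sq, sq]
    _ ≤ 2.75 ^ 2 + 12.8 ^ 2 := by
        gcongr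
        exact abs_re_sub_half_le hre
    _ ≤ 13.2 ^ 2 := by norm_num

lemma norm_chi_le (hre : s.re ∈ Icc (-1.25) 3.25) : ‖chi s‖ ≤ ‖s‖ * ‖s - 1‖ + 1 := by
  have zeta_le : ‖completedRiemannZeta₀ s‖ ≤ 1 := by
    simpa using norm_completedRiemannZeta₀_le_one
      ((abs_re_sub_half_le hre).trans (by norm_num : (2.75 : ℝ) ≤ 3))
  calc ‖chi s‖ ≤ ‖s‖ * ‖s - 1‖ * ‖completedRiemannZeta₀ s‖ + 1 := by
        simpa only [chi, norm_mul, norm_one] using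
          norm_add_le (s * (s - 1) * completedRiemannZeta₀ s) 1
    _ ≤ ‖s‖ * ‖s - 1‖ + 1 :=
        add_le_add_left (mul_le_of_le_one_right (by positivity) zeta_le) 1

lemma norm_chi_sub_chiApprox_le (hre : s.re ∈ Icc (-1.25) 3.25) (him : |s.im| ≤ 12.8) :
    ‖chi s - chiApprox s‖ ≤ ‖s‖ * ‖s - 1‖ * 6e-6 := by
  have zeta_sub_le : ‖completedRiemannZeta₀ s - zetaApprox (s - 1 / 2)‖ ≤ 6e-6 := by
    simpa using norm_completedRiemannZeta₀_sub_zetaApprox_le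
      ((abs_re_sub_half_le hre).trans (by norm_num : (2.75 : ℝ) ≤ 3)) (norm_sub_half_le hre him)
  have factor : chi s - chiApprox s =
      s * (s - 1) * (completedRiemannZeta₀ s - zetaApprox (s - 1 / 2)) := by
    rw [chi, chiApprox]
    ring
  rw [factor, norm_mul, norm_mul]
  gcongr

end ChiApprox

section F2Approx

variable {s : ℂ}

lemma norm_chi_add_two_le (hre : |s.re| ≤ 1.25) : ‖chi (s + 2)‖ ≤ ‖s + 2‖ * ‖s + 1‖ + 1 := by
  have hs : (s + 2).re ∈ Icc (-1.25 : ℝ) 3.25 := by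
    simp only [add_re, re_ofNat]
    constructor <;> linarith [abs_le.mp hre]
  simpa only [show s + 2 - 1 = s + 1 by ring] using norm_chi_le hs

lemma norm_chi_add_two_sub_chiApprox_le (hre : |s.re| ≤ 1.25) (him : |s.im| ≤ 12.8) :
    ‖chi (s + 2) - chiApprox (s + 2)‖ ≤ ‖s + 2‖ * ‖s + 1‖ * 6e-6 := by
  have hs : (s + 2).re ∈ Icc (-1.25 : ℝ) 3.25 := by
    simp only [add_re, re_ofNat]
    constructor <;> linarith [abs_le.mp hre]
  simpa only [show s + 2 - 1 = s + 1 by ring] using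
    norm_chi_sub_chiApprox_le hs (by simpa using him)

lemma norm_chi_add_one_sub_chiApprox_le (hre : |s.re| ≤ 1.25) (him : |s.im| ≤ 12.8) :
    ‖chi (s + 1) - chiApprox (s + 1)‖ ≤ ‖s + 1‖ * ‖s‖ * 6e-6 := by
  have hs : (s + 1).re ∈ Icc (-1.25 : ℝ) 3.25 := by
    simp only [add_re, one_re]
    constructor <;> linarith [abs_le.mp hre]
  simpa only [add_sub_cancel_right] using norm_chi_sub_chiApprox_le hs (by simpa using him)

lemma norm_f2Bracket_sub_f2BracketApprox_le (hre : |s.re| ≤ 1.25) (him : |s.im| ≤ 12.8) :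
    ‖f2Bracket s - f2BracketApprox s‖ ≤
      1e-15 * ‖s‖ * ‖s - 1‖ ^ 2 * (‖s + 2‖ * ‖s + 1‖ + 1) +
        (3 + 0.0472 * ‖s‖) * ‖s - 1‖ ^ 2 * (‖s + 2‖ * ‖s + 1‖ * 6e-6) +
        2 * ‖s - 1‖ * ‖s - 3‖ * (‖s + 1‖ * ‖s‖ * 6e-6) +
        ‖s + 2‖ * ‖s - 3‖ * (‖s‖ * ‖s - 1‖ * 6e-6) := by
  have split : f2Bracket s - f2BracketApprox s = (A - approxA) * s * (s - 1) ^ 2 * chi (s + 2) +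
      (approxA * s + 3) * (s - 1) ^ 2 * (chi (s + 2) - chiApprox (s + 2)) -
      2 * (s - 1) * (s - 3) * (chi (s + 1) - chiApprox (s + 1)) -
      (s + 2) * (s - 3) * (chi s - chiApprox s) := by
    rw [f2Bracket, f2BracketApprox]
    ring
  have hs : s.re ∈ Icc (-1.25 : ℝ) 3.25 := by
    constructor <;> linarith [abs_le.mp hre]
  rw [split]
  refine norm_sub_le_of_le (norm_sub_le_of_le (norm_add_le_of_le ?_ ?_) ?_) ?_
  · rw [norm_mul, norm_mul, norm_mul, norm_pow]
    gcongr
    exacts [norm_A_sub_approxA_le, norm_chi_add_two_le hre]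
  · rw [norm_mul, norm_mul, norm_pow]
    gcongr
    exacts [norm_approxA_mul_add_three_le s, norm_chi_add_two_sub_chiApprox_le hre him]
  · rw [norm_mul, norm_mul, norm_mul, norm_ofNat]
    gcongr
    exact norm_chi_add_one_sub_chiApprox_le hre him
  · rw [norm_mul, norm_mul]
    gcongr
    exact norm_chi_sub_chiApprox_le hs him

lemma norm_f2Denom_sub_f2DenomApprox_le (hre : |s.re| ≤ 1.25) (him : |s.im| ≤ 12.8) :
    ‖f2Denom s - f2DenomApprox s‖ ≤ (3 + 0.0472 * ‖s‖) * (‖s + 2‖ * ‖s + 1‖ * 6e-6) +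
      1e-15 * ‖s‖ * (‖s + 2‖ * ‖s + 1‖ + 1) := by
  have split : f2Denom s - f2DenomApprox s =
      (approxA * s + 3) * (chi (s + 2) - chiApprox (s + 2)) + (A - approxA) * s * chi (s + 2) := by
    rw [f2Denom, f2DenomApprox]
    ring
  rw [split]
  refine norm_add_le_of_le ?_ ?_
  · rw [norm_mul]
    gcongr
    exacts [norm_approxA_mul_add_three_le s, norm_chi_add_two_sub_chiApprox_le hre him]
  · rw [norm_mul, norm_mul]
    gcongr
    exacts [norm_A_sub_approxA_le, norm_chi_add_two_le hre]

end F2Approx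

section CriticalLine

variable {t : ℝ}

lemma norm_half_add_mul_I_add_mul_norm_le (t : ℝ) {c d r : ℝ}
    (hr : ((1 / 2 + c) ^ 2 + (1 / 2 + d) ^ 2) / 2 = r) :
    ‖1 / 2 + t * I + c‖ * ‖1 / 2 + t * I + d‖ ≤ t ^ 2 + r := by
  have norm_sq (c : ℝ) : ‖1 / 2 + t * I + c‖ ^ 2 = (1 / 2 + c) ^ 2 + t ^ 2 := by
    rw [← normSq_eq_norm_sq, ← normSq_add_mul_I]
    push_cast
    ring_nf
  linarith [two_mul_le_add_sq ‖1 / 2 + t * I + c‖ ‖1 / 2 + t * I + d‖, norm_sq c, norm_sq d]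

lemma norm_half_add_mul_I_le (ht0 : 0 ≤ t) (ht : t ≤ 12.8) : ‖1 / 2 + t * I‖ ≤ 13 := by
  have norm_sq_le : ‖1 / 2 + t * I‖ * ‖1 / 2 + t * I‖ ≤ t ^ 2 + 1 / 4 := by
    simpa using norm_half_add_mul_I_add_mul_norm_le t (c := 0) (d := 0) (by norm_num)
  nlinarith [norm_nonneg (1 / 2 + t * I)]

lemma norm_half_add_mul_I_add_two_mul_norm_le (t : ℝ) :
    ‖1 / 2 + t * I + 2‖ * ‖1 / 2 + t * I + 1‖ ≤ t ^ 2 + 17 / 4 := by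
  simpa using norm_half_add_mul_I_add_mul_norm_le t (c := 2) (d := 1) (by norm_num)

lemma norm_f2Bracket_sub_f2BracketApprox_half_le (ht0 : 0 ≤ t) (ht : t ≤ 12.8) :
    ‖f2Bracket (1 / 2 + t * I) - f2BracketApprox (1 / 2 + t * I)‖ ≤
      6e-6 * (7 * t ^ 4 + 32 * t ^ 2 + 14) := by
  have approx := norm_f2Bracket_sub_f2BracketApprox_le (s := 1 / 2 + t * I)
    (by norm_num [abs_le]) (by simpa [abs_of_nonneg ht0] using ht)
  have norm_le := norm_half_add_mul_I_le ht0 ht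
  have add_two_add_one := norm_half_add_mul_I_add_two_mul_norm_le t
  have product_le {c d r : ℝ} := norm_half_add_mul_I_add_mul_norm_le t (c := c) (d := d) (r := r)
  set s : ℂ := 1 / 2 + t * I
  have sub_one_sq : ‖s - 1‖ ^ 2 ≤ t ^ 2 + 1 / 4 := by
    simpa [sq, sub_eq_add_neg] using product_le (c := -1) (d := -1) (r := 1 / 4) (by norm_num)
  have sub_one_sub_three : ‖s - 1‖ * ‖s - 3‖ ≤ t ^ 2 + 13 / 4 := by
    simpa [sub_eq_add_neg] using product_le (c := -1) (d := -3) (by norm_num)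
  have add_one_self : ‖s + 1‖ * ‖s‖ ≤ t ^ 2 + 5 / 4 := by
    simpa using product_le (c := 1) (d := 0) (by norm_num)
  have add_two_sub_three : ‖s + 2‖ * ‖s - 3‖ ≤ t ^ 2 + 25 / 4 := by
    simpa [sub_eq_add_neg] using product_le (c := 2) (d := -3) (by norm_num)
  have self_sub_one : ‖s‖ * ‖s - 1‖ ≤ t ^ 2 + 1 / 4 := by
    simpa [sub_eq_add_neg] using product_le (c := 0) (d := -1) (r := 1 / 4) (by norm_num)
  rw [mul_assoc 2 ‖s - 1‖] at approx
  calc ‖f2Bracket s - f2BracketApprox s‖ ≤ _ := approx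
    _ ≤ 1e-15 * 13 * (t ^ 2 + 1 / 4) * (t ^ 2 + 17 / 4 + 1) +
        (3 + 0.0472 * 13) * (t ^ 2 + 1 / 4) * ((t ^ 2 + 17 / 4) * 6e-6) +
        2 * (t ^ 2 + 13 / 4) * ((t ^ 2 + 5 / 4) * 6e-6) +
        (t ^ 2 + 25 / 4) * ((t ^ 2 + 1 / 4) * 6e-6) := by gcongr
    _ ≤ 6e-6 * (7 * t ^ 4 + 32 * t ^ 2 + 14) := by nlinarith [sq_nonneg t, sq_nonneg (t ^ 2)]

lemma norm_f2Denom_sub_f2DenomApprox_half_le (ht0 : 0 ≤ t) (ht : t ≤ 12.8) :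
    ‖f2Denom (1 / 2 + t * I) - f2DenomApprox (1 / 2 + t * I)‖ ≤ 24e-6 * (t ^ 2 + 5) := by
  have approx := norm_f2Denom_sub_f2DenomApprox_le (s := 1 / 2 + t * I)
    (by norm_num [abs_le]) (by simpa [abs_of_nonneg ht0] using ht)
  have norm_le := norm_half_add_mul_I_le ht0 ht
  have add_two_add_one := norm_half_add_mul_I_add_two_mul_norm_le t
  calc ‖f2Denom (1 / 2 + t * I) - f2DenomApprox (1 / 2 + t * I)‖ ≤ _ := approx
    _ ≤ (3 + 0.0472 * 13) * ((t ^ 2 + 17 / 4) * 6e-6) +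
        1e-15 * 13 * (t ^ 2 + 17 / 4 + 1) := by gcongr
    _ ≤ 24e-6 * (t ^ 2 + 5) := by nlinarith [sq_nonneg t]

end CriticalLine

/-! ### Clearing denominators in the approximation of `f₂` -/

section ClearDenominators

/-- The factor by which `chiPoly E l` exceeds `chiApprox`. -/
def chiPolyScale (E : ℤ) : ℤ := zetaPolyDenom * (4 * E * E) ^ zetaPoly.length

/-- The factor by which `f2DenomPoly E l` exceeds `f2DenomApprox`. -/
def f2DenomPolyScale (E : ℤ) : ℤ := chiPolyScale E * (2 * approxADenom * E)

/-- The factor by which `f2BracketPoly E l` exceeds `f2BracketApprox`. -/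
def f2BracketPolyScale (E : ℤ) : ℤ := f2DenomPolyScale E * (4 * E * E)

/-- The integral multiple of `chiApprox s` as a polynomial in `x`, where `l = (2 * s - 1) * E`. -/
def chiPoly (E : ℤ) (l : GaussPoly) : GaussPoly :=
  .add (.mul (.add (.mul l l) (.const (-(E * E)))) (.homogComp (4 * E * E) (.mul l l) zetaPoly))
    (.const (chiPolyScale E))

/-- The integral multiple of `f2DenomApprox s` as a polynomial in `x`, where
`l = (2 * s - 1) * E`. -/
def f2DenomPoly (E : ℤ) (l : GaussPoly) : GaussPoly :=
  .mul (.add (.smul approxANumer (.add l (.const E))) (.const (6 * approxADenom * E)))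
    (chiPoly E (.add l (.const (4 * E))))

/-- The integral multiple of `f2BracketApprox s` as a polynomial in `x`, where
`l = (2 * s - 1) * E`. -/
def f2BracketPoly (E : ℤ) (l : GaussPoly) : GaussPoly :=
  .add (.mul (.mul (.add l (.const (-E))) (.add l (.const (-E)))) (f2DenomPoly E l))
    (.smul (-(2 * approxADenom * E))
      (.add
        (.smul 2 (.mul (.mul (.add l (.const (-E))) (.add l (.const (-5 * E))))
          (chiPoly E (.add l (.const (2 * E))))))
        (.mul (.mul (.add l (.const (5 * E))) (.add l (.const (-5 * E)))) (chiPoly E l))))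

variable {E : ℤ} {l : GaussPoly} {x s : ℂ}

lemma approxADenom_ne_zero : (approxADenom : ℂ) ≠ 0 := by
  norm_num [approxADenom]

lemma eval_chiPoly (hE : E ≠ 0) (hs : l.eval x = (2 * s - 1) * E) :
    (chiPoly E l).eval x = chiPolyScale E * chiApprox s := by
  have hE' : (E : ℂ) ≠ 0 := by exact_mod_cast hE
  have denom_ne : (zetaPolyDenom : ℂ) ≠ 0 := by exact_mod_cast zetaPolyDenom_pos.ne'
  have comp := GaussPoly.eval_homogComp (l.mul l) x (D := 4 * E * E) (by simp [hE]) zetaPoly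
  have arg_eq : (2 * s - 1) * E * ((2 * s - 1) * E) / ((4 * E * E : ℤ) : ℂ) = (s - 1 / 2) ^ 2 := by
    push_cast
    field_simp
    ring
  rw [GaussPoly.eval_mul, hs, arg_eq] at comp
  simp only [chiPoly, GaussPoly.eval_add, GaussPoly.eval_mul, GaussPoly.eval_const, hs, chiApprox,
    zetaApprox, chiPolyScale]
  push_cast at comp ⊢
  generalize zetaPoly.eval ((s - 1 / 2) ^ 2) = w at comp ⊢
  field_simp
  linear_combination s * (s - 1) * comp

lemma eval_add_const (hs : l.eval x = (2 * s - 1) * E) (n : ℤ) :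
    (GaussPoly.add l (.const (2 * n * E))).eval x = (2 * (s + n) - 1) * E := by
  rw [GaussPoly.eval_add, GaussPoly.eval_const, hs]
  push_cast
  ring

lemma eval_f2DenomPoly (hE : E ≠ 0) (hs : l.eval x = (2 * s - 1) * E) :
    (f2DenomPoly E l).eval x = f2DenomPolyScale E * f2DenomApprox s := by
  have chi_add_two := eval_chiPoly hE (eval_add_const hs 2)
  have denom_ne := approxADenom_ne_zero
  norm_num at chi_add_two
  simp only [f2DenomPoly, GaussPoly.eval_mul, GaussPoly.eval_add, GaussPoly.eval_smul,
    GaussPoly.eval_const, chi_add_two, hs, f2DenomApprox, approxA, f2DenomPolyScale]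
  push_cast
  field_simp
  ring

lemma eval_f2BracketPoly (hE : E ≠ 0) (hs : l.eval x = (2 * s - 1) * E) :
    (f2BracketPoly E l).eval x = f2BracketPolyScale E * f2BracketApprox s := by
  have chi_add_one := eval_chiPoly hE (eval_add_const hs 1)
  have denom_ne := approxADenom_ne_zero
  norm_num at chi_add_one
  simp only [f2BracketPoly, GaussPoly.eval_mul, GaussPoly.eval_add, GaussPoly.eval_smul,
    GaussPoly.eval_const, chi_add_one, eval_chiPoly hE hs, eval_f2DenomPoly hE hs, hs,
    f2BracketApprox, f2DenomApprox, approxA, f2BracketPolyScale, f2DenomPolyScale]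
  push_cast
  field_simp
  ring

lemma f2DenomPolyScale_pos (hE : 0 < E) : 0 < f2DenomPolyScale E := by
  have denom_pos := zetaPolyDenom_pos
  have approxADenom_pos : 0 < approxADenom := by norm_num [approxADenom]
  unfold f2DenomPolyScale chiPolyScale
  positivity

lemma f2BracketPolyScale_pos (hE : 0 < E) : 0 < f2BracketPolyScale E := by
  have scale_pos := f2DenomPolyScale_pos hE
  unfold f2BracketPolyScale
  positivity

end ClearDenominators

/-! ### Positivity on the critical line at small height -/

lemma GaussPoly.eval_iterate_shift (p : GaussPoly) (j : ℕ) (x : ℂ) :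
    (shift^[j] p).eval x = p.eval (x + j) := by
  induction j generalizing p with
  | zero => simp
  | succ j ih =>
    rw [Function.iterate_succ_apply, ih, eval_shift]
    push_cast
    ring_nf

/-- A disc containing `10 ^ 6 * conjQuadratic ρ (1 / 2 + t * I)` for `k ≤ 5 * t ≤ k + 1` and `ρ`
near its true value. -/
def conjQuadraticDisc (k : ℤ) : GaussDisc where
  re := 12209000 - 10000 * (2 * k + 1) ^ 2
  im := -134000 * (2 * k + 1)
  radius := 20000 * (2 * k + 1) + 10000 + 67000 + 134000 + 1400 * (2 * k + 2)

/-- The common factor of `f2BracketPolyScale 5` and `f2DenomPolyScale 5` in which the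
approximation errors are measured. -/
def errorUnit : ℤ := zetaPolyDenom * 100 ^ 19 * 10 ^ 10

/-- A disc containing a positive multiple of `f2Bracket s * conj (f2Denom s * conjQuadratic ρ s)`
for all `s = 1 / 2 + t * I` with `k ≤ 5 * t ≤ k + 1`, where `p` and `q` are the polynomials of
`f2Bracket` and `f2Denom` in the variable `5 * t - k - 1 / 2`. -/
def boundaryDisc (k : ℤ) (p q : GaussPoly) : GaussDisc :=
  (GaussDisc.ofPoly p
      (6 * (7 * (2 * k + 2) ^ 4 + 3200 * (2 * k + 2) ^ 2 + 140000) * errorUnit)).mul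
    ((GaussDisc.ofPoly q (24 * ((2 * k + 2) ^ 2 + 500) * errorUnit)).conjugate.mul
      (conjQuadraticDisc k).conjugate)

/-- Tests that the boundary discs of `n` consecutive intervals of length `1 / 5` starting at
`k / 5` lie in the right half-plane. -/
def boundaryCheck : ℕ → ℤ → GaussPoly → GaussPoly → Bool
  | 0, _, _, _ => true
  | n + 1, k, p, q => decide ((boundaryDisc k p q).radius < (boundaryDisc k p q).re) &&
      boundaryCheck n (k + 1) p.shift q.shift

/-- The polynomial `2 * X + 1` times `I`, which is `(2 * s - 1) * 5` for `s = 1 / 2 + t * I` and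
`X = 5 * t - 1 / 2`. -/
def linePoly : GaussPoly := ([], [1, 2])

/-- The polynomial of `f2Bracket` on the critical line. -/
def f2BracketLinePoly : GaussPoly := f2BracketPoly 5 linePoly

/-- The polynomial of `f2Denom` on the critical line. -/
def f2DenomLinePoly : GaussPoly := f2DenomPoly 5 linePoly

set_option maxRecDepth 100000 in
lemma boundaryCheck_linePoly : boundaryCheck 64 0 f2BracketLinePoly f2DenomLinePoly = true := by
  decide +kernel

lemma boundaryDisc_of_boundaryCheck {n : ℕ} {k : ℤ} {p q : GaussPoly}
    (h : boundaryCheck n k p q = true) {j : ℕ} (hj : j < n) :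
    (boundaryDisc (k + j) (GaussPoly.shift^[j] p) (GaussPoly.shift^[j] q)).radius <
      (boundaryDisc (k + j) (GaussPoly.shift^[j] p) (GaussPoly.shift^[j] q)).re := by
  induction n generalizing k p q j with
  | zero => omega
  | succ n ih =>
    rw [boundaryCheck, Bool.and_eq_true, decide_eq_true_eq] at h
    cases j with
    | zero => simpa using h.1
    | succ j =>
      rw [Function.iterate_succ_apply, Function.iterate_succ_apply,
        show k + (j + 1 : ℕ) = k + 1 + j by push_cast; ring]
      exact ih h.2 (by omega)

lemma f2DenomPolyScale_five : f2DenomPolyScale 5 = errorUnit * 10 ^ 8 := by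
  rw [f2DenomPolyScale, chiPolyScale, errorUnit, approxADenom, show zetaPoly.length = 19 from rfl]
  ring

lemma f2BracketPolyScale_five : f2BracketPolyScale 5 = errorUnit * 10 ^ 10 := by
  rw [f2BracketPolyScale, f2DenomPolyScale_five]
  ring

lemma eval_linePoly (t : ℝ) :
    linePoly.eval (5 * t - 1 / 2 : ℝ) = (2 * (1 / 2 + t * I) - 1) * (5 : ℤ) := by
  simp only [linePoly, GaussPoly.eval, IntPoly.eval_nil, IntPoly.eval_cons]
  push_cast
  ring

section SmallHeight

variable {t : ℝ} {k : ℕ}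

lemma ofPoly_iterate_shift_contains (hk : k ≤ 5 * t) (hk' : 5 * t ≤ k + 1) {p : GaussPoly} {ε : ℤ}
    {z : ℂ} (hz : ‖z - p.eval (5 * t - 1 / 2 : ℝ)‖ ≤ ε) :
    (GaussDisc.ofPoly (GaussPoly.shift^[k] p) ε).Contains z := by
  have local_coord : ‖((5 * t - 1 / 2 - k : ℝ) : ℂ)‖ ≤ 1 / 2 := by
    rw [norm_real, Real.norm_eq_abs, abs_le]
    constructor <;> linarith
  have coord_add : ((5 * t - 1 / 2 - k : ℝ) : ℂ) + k = (5 * t - 1 / 2 : ℝ) := by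
    push_cast
    ring
  refine GaussDisc.ofPoly_contains _ local_coord ?_
  rwa [GaussPoly.eval_iterate_shift, coord_add]

lemma f2Bracket_mem_disc (ht : t ≤ 12.8) (hk : k ≤ 5 * t) (hk' : 5 * t ≤ k + 1) :
    (GaussDisc.ofPoly (GaussPoly.shift^[k] f2BracketLinePoly)
      (6 * (7 * (2 * k + 2) ^ 4 + 3200 * (2 * k + 2) ^ 2 + 140000) * errorUnit)).Contains
      (f2BracketPolyScale 5 * f2Bracket (1 / 2 + t * I)) := by
  have scale_pos : (0 : ℝ) < f2BracketPolyScale 5 := by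
    exact_mod_cast f2BracketPolyScale_pos (by norm_num)
  have t_nonneg : 0 ≤ t := by linarith
  have t_le : t ≤ (2 * k + 2) / 10 := by linarith
  refine ofPoly_iterate_shift_contains hk hk' ?_
  rw [f2BracketLinePoly, eval_f2BracketPoly (by norm_num) (eval_linePoly t), ← mul_sub, norm_mul,
    norm_intCast, abs_of_pos scale_pos]
  calc (f2BracketPolyScale 5 : ℝ) * ‖f2Bracket (1 / 2 + t * I) - f2BracketApprox (1 / 2 + t * I)‖
      ≤ f2BracketPolyScale 5 * (6e-6 * (7 * t ^ 4 + 32 * t ^ 2 + 14)) := by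
        gcongr
        exact norm_f2Bracket_sub_f2BracketApprox_half_le t_nonneg ht
    _ ≤ f2BracketPolyScale 5 *
          (6e-6 * (7 * ((2 * k + 2) / 10) ^ 4 + 32 * ((2 * k + 2) / 10) ^ 2 + 14)) := by
        gcongr
    _ = _ := by
        rw [f2BracketPolyScale_five]
        push_cast
        ring

lemma f2Denom_mem_disc (ht : t ≤ 12.8) (hk : k ≤ 5 * t) (hk' : 5 * t ≤ k + 1) :
    (GaussDisc.ofPoly (GaussPoly.shift^[k] f2DenomLinePoly)
      (24 * ((2 * k + 2) ^ 2 + 500) * errorUnit)).Contains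
      (f2DenomPolyScale 5 * f2Denom (1 / 2 + t * I)) := by
  have scale_pos : (0 : ℝ) < f2DenomPolyScale 5 := by
    exact_mod_cast f2DenomPolyScale_pos (by norm_num)
  have t_nonneg : 0 ≤ t := by linarith
  have t_le : t ≤ (2 * k + 2) / 10 := by linarith
  refine ofPoly_iterate_shift_contains hk hk' ?_
  rw [f2DenomLinePoly, eval_f2DenomPoly (by norm_num) (eval_linePoly t), ← mul_sub, norm_mul,
    norm_intCast, abs_of_pos scale_pos]
  calc (f2DenomPolyScale 5 : ℝ) * ‖f2Denom (1 / 2 + t * I) - f2DenomApprox (1 / 2 + t * I)‖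
      ≤ f2DenomPolyScale 5 * (24e-6 * (t ^ 2 + 5)) := by
        gcongr
        exact norm_f2Denom_sub_f2DenomApprox_half_le t_nonneg ht
    _ ≤ f2DenomPolyScale 5 * (24e-6 * (((2 * k + 2) / 10) ^ 2 + 5)) := by gcongr
    _ = _ := by
        rw [f2DenomPolyScale_five]
        push_cast
        ring

variable {ρ : ℂ}

lemma abs_re_conjQuadratic_sub_le (hp : |ρ.re - 1.17| ≤ 0.007) (hm : |normSq ρ - 13.129| ≤ 0.06)
    (hk : k ≤ 5 * t) (hk' : 5 * t ≤ k + 1) :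
    |-(10 ^ 6 * (t ^ 2 - 1 / 4 + ρ.re - normSq ρ)) - (12209000 - 10000 * (2 * k + 1) ^ 2)| ≤
      20000 * (2 * (k : ℝ) + 1) + 10000 + 67000 := by
  rw [abs_le] at hp hm ⊢
  have lower : (k : ℝ) ^ 2 ≤ (5 * t) ^ 2 := by gcongr
  have upper : (5 * t) ^ 2 ≤ (k + 1 : ℝ) ^ 2 := by gcongr; linarith
  constructor <;> linarith

lemma abs_im_conjQuadratic_sub_le (hp : |ρ.re - 1.17| ≤ 0.007) (hk : k ≤ 5 * t)
    (hk' : 5 * t ≤ k + 1) :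
    |-(10 ^ 6 * (t * (2 * ρ.re - 1))) + 134000 * (2 * k + 1)| ≤
      134000 + 1400 * (2 * (k : ℝ) + 2) := by
  have t_nonneg : 0 ≤ t := by linarith
  rw [abs_le] at hp ⊢
  constructor <;> nlinarith

lemma conjQuadratic_mem_disc (hp : |ρ.re - 1.17| ≤ 0.007) (hm : |normSq ρ - 13.129| ≤ 0.06)
    (hk : k ≤ 5 * t) (hk' : 5 * t ≤ k + 1) :
    (conjQuadraticDisc k).Contains (10 ^ 6 * conjQuadratic ρ (1 / 2 + t * I)) := by
  set a := -(10 ^ 6 * (t ^ 2 - 1 / 4 + ρ.re - normSq ρ)) - (12209000 - 10000 * (2 * k + 1) ^ 2)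
    with ha
  set b := -(10 ^ 6 * (t * (2 * ρ.re - 1))) + 134000 * (2 * k + 1) with hb
  have sub_center : 10 ^ 6 * conjQuadratic ρ (1 / 2 + t * I) -
      ((conjQuadraticDisc k).re + I * (conjQuadraticDisc k).im) = a + b * I := by
    rw [conjQuadratic_half_add_mul_I, conjQuadraticDisc, ha, hb]
    push_cast
    ring
  calc ‖10 ^ 6 * conjQuadratic ρ (1 / 2 + t * I) -
        ((conjQuadraticDisc k).re + I * (conjQuadraticDisc k).im)‖ ≤ |a| + |b| := by
        rw [sub_center]
        simpa using norm_add_le (a : ℂ) (b * I)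
    _ ≤ 20000 * (2 * k + 1) + 10000 + 67000 + (134000 + 1400 * (2 * k + 2)) :=
        add_le_add (abs_re_conjQuadratic_sub_le hp hm hk hk')
          (abs_im_conjQuadratic_sub_le hp hk hk')
    _ = (conjQuadraticDisc k).radius := by
        rw [conjQuadraticDisc]
        push_cast
        ring

theorem boundaryForm_pos_of_small (hp : |ρ.re - 1.17| ≤ 0.007) (hm : |normSq ρ - 13.129| ≤ 0.06)
    (ht0 : 0 ≤ t) (ht : t < 12.8) : 0 < boundaryForm ρ (1 / 2 + t * I) := by
  set k := ⌊5 * t⌋₊ with hk_def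
  have hk : k ≤ 5 * t := Nat.floor_le (by linarith)
  have hk' : 5 * t ≤ k + 1 := (Nat.lt_floor_add_one _).le
  have k_lt : k < 64 := by
    rw [hk_def, Nat.floor_lt (by linarith)]
    norm_num
    linarith
  have check := boundaryDisc_of_boundaryCheck boundaryCheck_linePoly k_lt
  rw [zero_add] at check
  have form_pos := GaussDisc.Contains.re_pos ((f2Bracket_mem_disc ht.le hk hk').mul
    ((f2Denom_mem_disc ht.le hk hk').conjugate.mul
      (conjQuadratic_mem_disc hp hm hk hk').conjugate)) check
  have bracketScale_pos : (0 : ℝ) < f2BracketPolyScale 5 := by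
    exact_mod_cast f2BracketPolyScale_pos (by norm_num)
  have denomScale_pos : (0 : ℝ) < f2DenomPolyScale 5 := by
    exact_mod_cast f2DenomPolyScale_pos (by norm_num)
  have collect : f2BracketPolyScale 5 * f2Bracket (1 / 2 + t * I) *
      (conj (f2DenomPolyScale 5 * f2Denom (1 / 2 + t * I)) *
        conj (10 ^ 6 * conjQuadratic ρ (1 / 2 + t * I))) =
      ((f2BracketPolyScale 5 * f2DenomPolyScale 5 * 10 ^ 6 : ℝ) : ℂ) *
        (f2Bracket (1 / 2 + t * I) *
          conj (f2Denom (1 / 2 + t * I) * conjQuadratic ρ (1 / 2 + t * I))) := by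
    simp only [map_mul, map_intCast, map_pow, map_ofNat]
    push_cast
    ring
  rw [collect, re_ofReal_mul] at form_pos
  exact (mul_pos_iff_of_pos_left (by positivity)).mp form_pos

end SmallHeight

/-! ### The zero near `1.17 + 3.4293 i` -/

lemma exists_mem_closedBall_eq_zero {f : ℂ → ℂ} (hf : Differentiable ℂ f) {c : ℂ} {r ε : ℝ}
    (hr : 0 < r) (hsphere : ∀ z ∈ Metric.sphere c r, ε ≤ ‖f z - f c‖) (hc : ‖f c‖ < ε / 2) :
    ∃ z ∈ Metric.closedBall c r, f z = 0 := by
  have ε_pos : 0 < ε := by linarith [norm_nonneg (f c)]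
  have not_locally_const : ∃ᶠ z in 𝓝 c, f z ≠ f c := by
    intro eventually_eq
    simp only [not_not] at eventually_eq
    have analytic : AnalyticOnNhd ℂ f univ := hf.differentiableOn.analyticOnNhd isOpen_univ
    have const := analytic.eq_of_eventuallyEq (g := fun _ ↦ f c) analyticOnNhd_const eventually_eq
    have on_sphere := hsphere (c + r) (by simp [abs_of_pos hr])
    rw [congrFun const (c + r), sub_self, norm_zero] at on_sphere
    linarith
  exact hf.diffContOnCl.ball_subset_image_closedBall hr hsphere not_locally_const
    (by simpa [mem_ball_iff_norm] using hc)

lemma GaussPoly.eval_eq_add_mul_add_sq_mul (p : GaussPoly) (x : ℂ) :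
    p.eval x = ((p.1.headD 0 : ℤ) + I * (p.2.headD 0 : ℤ)) +
      x * ((p.1.tail.headD 0 : ℤ) + I * (p.2.tail.headD 0 : ℤ)) +
      x ^ 2 * (IntPoly.eval p.1.tail.tail x + I * IntPoly.eval p.2.tail.tail x) := by
  rw [eval, IntPoly.eval_eq_headD_add p.1, IntPoly.eval_eq_headD_add p.2,
    IntPoly.eval_eq_headD_add p.1.tail, IntPoly.eval_eq_headD_add p.2.tail]
  ring

lemma le_norm_of_sq_le {a b M : ℤ} (h : M ^ 2 ≤ a ^ 2 + b ^ 2) : M ≤ ‖(a + I * b : ℂ)‖ := by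
  refine le_of_sq_le_sq ?_ (norm_nonneg _)
  rw [← normSq_eq_norm_sq, mul_comm, ← ofReal_intCast, ← ofReal_intCast, normSq_add_mul_I]
  exact_mod_cast h

/-- The approximate zero of `f₂`. -/
noncomputable def zeroCenter : ℂ := 1.17 + 3.4293 * I

/-- The polynomial `x ↦ f2BracketApprox (zeroCenter + x / 75)` with denominators cleared. -/
def zeroPoly : GaussPoly := f2BracketPoly 15000 ([20100, 400], [102879])

set_option maxRecDepth 100000 in
lemma zeroPoly_coeff_bounds :
    10000 * gaussBound (zeroPoly.1.headD 0) (zeroPoly.2.headD 0) ≤ 7 * f2BracketPolyScale 15000 ∧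
    (740 * f2BracketPolyScale 15000) ^ 2 ≤
      (10000 * zeroPoly.1.tail.headD 0) ^ 2 + (10000 * zeroPoly.2.tail.headD 0) ^ 2 ∧
    1000 * GaussPoly.halfBound zeroPoly.1.tail.tail zeroPoly.2.tail.tail ≤
      f2BracketPolyScale 15000 := by
  decide +kernel

lemma eval_zeroPoly (x : ℂ) : zeroPoly.eval x =
    f2BracketPolyScale 15000 * f2BracketApprox (zeroCenter + x / 75) := by
  refine eval_f2BracketPoly (by norm_num) ?_
  simp only [GaussPoly.eval, IntPoly.eval_nil, IntPoly.eval_cons, zeroCenter]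
  push_cast
  ring

lemma f2BracketPolyScale_cast_pos : (0 : ℝ) < f2BracketPolyScale 15000 := by
  exact_mod_cast f2BracketPolyScale_pos (by norm_num)

lemma norm_f2BracketApprox_zeroCenter_le : ‖f2BracketApprox zeroCenter‖ ≤ 0.0007 := by
  have scale_pos := f2BracketPolyScale_cast_pos
  have bound : (10000 : ℝ) * gaussBound (zeroPoly.1.headD 0) (zeroPoly.2.headD 0) ≤
      7 * f2BracketPolyScale 15000 := by exact_mod_cast zeroPoly_coeff_bounds.1
  have value := eval_zeroPoly 0
  rw [GaussPoly.eval_eq_add_mul_add_sq_mul, zero_div, add_zero, zero_mul, zero_pow two_ne_zero,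
    zero_mul, add_zero, add_zero] at value
  have norm_le := norm_le_gaussBound (zeroPoly.1.headD 0) (zeroPoly.2.headD 0)
  rw [value, norm_mul, norm_intCast, abs_of_pos scale_pos] at norm_le
  refine le_of_mul_le_mul_left ?_ scale_pos
  linarith

lemma le_norm_zeroPoly_linear_coeff : 0.074 * f2BracketPolyScale 15000 ≤
    ‖((zeroPoly.1.tail.headD 0 : ℤ) + I * (zeroPoly.2.tail.headD 0 : ℤ) : ℂ)‖ := by
  have scaled := le_norm_of_sq_le zeroPoly_coeff_bounds.2.1
  generalize zeroPoly.1.tail.headD 0 = a at scaled ⊢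
  generalize zeroPoly.2.tail.headD 0 = b at scaled ⊢
  have factor : (((10000 * a : ℤ) : ℂ) + I * (10000 * b : ℤ)) = 10000 * (a + I * b) := by
    push_cast
    ring
  rw [factor, norm_mul, norm_ofNat, Int.cast_mul, Int.cast_ofNat] at scaled
  linarith

lemma norm_zeroPoly_quadratic_le {x : ℂ} (hx : ‖x‖ ≤ 1 / 2) :
    ‖IntPoly.eval zeroPoly.1.tail.tail x + I * IntPoly.eval zeroPoly.2.tail.tail x‖ ≤
      f2BracketPolyScale 15000 / 1000 := by
  have bound : (1000 : ℝ) * GaussPoly.halfBound zeroPoly.1.tail.tail zeroPoly.2.tail.tail ≤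
    f2BracketPolyScale 15000 := by exact_mod_cast zeroPoly_coeff_bounds.2.2
  linarith [GaussPoly.norm_eval_le_halfBound zeroPoly.1.tail.tail zeroPoly.2.tail.tail hx]

lemma f2BracketApprox_zeroCenter_add_sub (x : ℂ) : f2BracketPolyScale 15000 *
      (f2BracketApprox (zeroCenter + x / 75) - f2BracketApprox zeroCenter) =
    x * ((zeroPoly.1.tail.headD 0 : ℤ) + I * (zeroPoly.2.tail.headD 0 : ℤ)) +
      x ^ 2 * (IntPoly.eval zeroPoly.1.tail.tail x + I * IntPoly.eval zeroPoly.2.tail.tail x) := by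
  have at_zero := eval_zeroPoly 0
  have at_x := eval_zeroPoly x
  rw [GaussPoly.eval_eq_add_mul_add_sq_mul] at at_zero at_x
  rw [zero_div, add_zero] at at_zero
  linear_combination at_zero - at_x

lemma le_norm_f2BracketApprox_zeroCenter_add_sub {x : ℂ} (hx : ‖x‖ = 1 / 2) :
    0.03675 ≤ ‖f2BracketApprox (zeroCenter + x / 75) - f2BracketApprox zeroCenter‖ := by
  have scale_pos := f2BracketPolyScale_cast_pos
  have linear_ge := le_norm_zeroPoly_linear_coeff
  have quadratic_le := norm_zeroPoly_quadratic_le hx.le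
  have diff_eq := f2BracketApprox_zeroCenter_add_sub x
  set linear : ℂ := (zeroPoly.1.tail.headD 0 : ℤ) + I * (zeroPoly.2.tail.headD 0 : ℤ)
  set quadratic := IntPoly.eval zeroPoly.1.tail.tail x + I * IntPoly.eval zeroPoly.2.tail.tail x
  refine le_of_mul_le_mul_left ?_ scale_pos
  calc f2BracketPolyScale 15000 * 0.03675
      ≤ ‖x * linear‖ - ‖x ^ 2 * quadratic‖ := by
        rw [norm_mul, norm_mul, norm_pow, hx]
        linarith
    _ ≤ ‖x * linear + x ^ 2 * quadratic‖ := norm_sub_le_norm_add _ _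
    _ = _ := by rw [← diff_eq, norm_mul, norm_intCast, abs_of_pos scale_pos]

lemma abs_re_sub_le_of_norm_sub_zeroCenter_le {s : ℂ} {r : ℝ} (hs : ‖s - zeroCenter‖ ≤ r) :
    |s.re - 1.17| ≤ r := by
  simpa [zeroCenter] using (abs_re_le_norm _).trans hs

lemma abs_im_sub_le_of_norm_sub_zeroCenter_le {s : ℂ} {r : ℝ} (hs : ‖s - zeroCenter‖ ≤ r) :
    |s.im - 3.4293| ≤ r := by
  simpa [zeroCenter] using (abs_im_le_norm _).trans hs

lemma norm_add_le_of_norm_sub_zeroCenter_le {s : ℂ} (hs : ‖s - zeroCenter‖ ≤ 1 / 150) {c M : ℝ}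
    (hM : 0 ≤ M) (hleft : (1.16 + c) ^ 2 + 3.436 ^ 2 ≤ M ^ 2)
    (hright : (1.18 + c) ^ 2 + 3.436 ^ 2 ≤ M ^ 2) : ‖s + c‖ ≤ M := by
  have hre := abs_le.mp (abs_re_sub_le_of_norm_sub_zeroCenter_le hs)
  have him := abs_le.mp (abs_im_sub_le_of_norm_sub_zeroCenter_le hs)
  refine le_of_sq_le_sq ?_ hM
  rw [← normSq_eq_norm_sq, normSq_apply, add_re, add_im, ofReal_re, ofReal_im]
  nlinarith

lemma norm_f2Bracket_sub_f2BracketApprox_near_zeroCenter_le {s : ℂ}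
    (hs : ‖s - zeroCenter‖ ≤ 1 / 150) : ‖f2Bracket s - f2BracketApprox s‖ ≤ 0.0082 := by
  have hre := abs_le.mp (abs_re_sub_le_of_norm_sub_zeroCenter_le hs)
  have him := abs_le.mp (abs_im_sub_le_of_norm_sub_zeroCenter_le hs)
  have norm_le {c M : ℝ} := norm_add_le_of_norm_sub_zeroCenter_le hs (c := c) (M := M)
  have hs_zero : ‖s‖ ≤ 3.64 := by
    simpa using norm_le (c := 0) (by norm_num) (by norm_num) (by norm_num)
  have hs_sub_one : ‖s - 1‖ ≤ 3.45 := by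
    simpa [sub_eq_add_neg] using
      norm_le (c := -1) (M := 3.45) (by norm_num) (by norm_num) (by norm_num)
  have hs_sub_three : ‖s - 3‖ ≤ 3.90 := by
    simpa [sub_eq_add_neg] using
      norm_le (c := -3) (M := 3.90) (by norm_num) (by norm_num) (by norm_num)
  have hs_add_one : ‖s + 1‖ ≤ 4.08 := by
    simpa using norm_le (c := 1) (by norm_num) (by norm_num) (by norm_num)
  have hs_add_two : ‖s + 2‖ ≤ 4.69 := by
    simpa using norm_le (c := 2) (by norm_num) (by norm_num) (by norm_num)
  calc _ ≤ _ := norm_f2Bracket_sub_f2BracketApprox_le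
        (abs_le.mpr ⟨by linarith, by linarith⟩) (abs_le.mpr ⟨by linarith, by linarith⟩)
    _ ≤ 1e-15 * 3.64 * 3.45 ^ 2 * (4.69 * 4.08 + 1)
        + (3 + 0.0472 * 3.64) * 3.45 ^ 2 * (4.69 * 4.08 * 6e-6)
        + 2 * 3.45 * 3.90 * (4.08 * 3.64 * 6e-6)
        + 4.69 * 3.90 * (3.64 * 3.45 * 6e-6) := by gcongr
    _ ≤ 0.0082 := by norm_num

lemma norm_f2Bracket_zeroCenter_le : ‖f2Bracket zeroCenter‖ ≤ 0.0089 := by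
  have error := norm_f2Bracket_sub_f2BracketApprox_near_zeroCenter_le (s := zeroCenter) (by simp)
  linarith [norm_le_norm_sub_add (f2Bracket zeroCenter) (f2BracketApprox zeroCenter),
    norm_f2BracketApprox_zeroCenter_le]

lemma le_norm_f2Bracket_sub_zeroCenter {s : ℂ} (hs : ‖s - zeroCenter‖ = 1 / 150) :
    0.02035 ≤ ‖f2Bracket s - f2Bracket zeroCenter‖ := by
  have error_s := norm_f2Bracket_sub_f2BracketApprox_near_zeroCenter_le hs.le
  have error_center :=
    norm_f2Bracket_sub_f2BracketApprox_near_zeroCenter_le (s := zeroCenter) (by simp)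
  have approx_ge := le_norm_f2BracketApprox_zeroCenter_add_sub (x := 75 * (s - zeroCenter))
    (by rw [norm_mul, hs]; norm_num)
  rw [mul_div_cancel_left₀ _ (by norm_num), add_sub_cancel] at approx_ge
  have error_diff := norm_sub_le (f2Bracket s - f2BracketApprox s)
    (f2Bracket zeroCenter - f2BracketApprox zeroCenter)
  rw [sub_sub_sub_comm] at error_diff
  linarith [norm_sub_norm_le (f2BracketApprox s - f2BracketApprox zeroCenter)
      (f2Bracket s - f2Bracket zeroCenter),
    norm_sub_rev (f2BracketApprox s - f2BracketApprox zeroCenter)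
      (f2Bracket s - f2Bracket zeroCenter)]

lemma exists_f2Bracket_eq_zero : ∃ ρ, ‖ρ - zeroCenter‖ ≤ 1 / 150 ∧ f2Bracket ρ = 0 := by
  obtain ⟨ρ, hmem, hzero⟩ := exists_mem_closedBall_eq_zero differentiable_f2Bracket
    (c := zeroCenter) (r := 1 / 150) (ε := 0.02035) (by norm_num)
    (fun z hz ↦ le_norm_f2Bracket_sub_zeroCenter (mem_sphere_iff_norm.mp hz))
    (norm_f2Bracket_zeroCenter_le.trans_lt (by norm_num))
  exact ⟨ρ, mem_closedBall_iff_norm.mp hmem, hzero⟩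

lemma abs_normSq_sub_le_of_norm_sub_zeroCenter_le {s : ℂ} (hs : ‖s - zeroCenter‖ ≤ 1 / 150) :
    |normSq s - 13.129| ≤ 0.06 := by
  have hre := abs_le.mp (abs_re_sub_le_of_norm_sub_zeroCenter_le hs)
  have him := abs_le.mp (abs_im_sub_le_of_norm_sub_zeroCenter_le hs)
  have dist_sq : (s.re - 1.17) ^ 2 + (s.im - 3.4293) ^ 2 ≤ (1 / 150) ^ 2 := by
    have := pow_le_pow_left₀ (norm_nonneg _) hs 2
    rw [← normSq_eq_norm_sq, normSq_apply] at this
    simpa [zeroCenter, ← sq] using this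
  rw [normSq_apply, abs_le]
  constructor <;> nlinarith

theorem f2_zeros_right_halfplane :
    ∃ ρ₀ : ℂ, (1.1 : ℝ) < ρ₀.re ∧ ρ₀.re < (1.25 : ℝ) ∧
      (3.3 : ℝ) < ρ₀.im ∧ ρ₀.im < (3.55 : ℝ) ∧
      {s : ℂ | 1 / 2 ≤ s.re ∧ f2 s = 0} = {2, ρ₀, (starRingEnd ℂ) ρ₀} ∧
      deriv f2 2 ≠ 0 ∧ deriv f2 ρ₀ ≠ 0 ∧ deriv f2 ((starRingEnd ℂ) ρ₀) ≠ 0 := by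
  obtain ⟨ρ, near_center, hzero⟩ := exists_f2Bracket_eq_zero
  have hre := abs_re_sub_le_of_norm_sub_zeroCenter_le near_center
  have him := abs_im_sub_le_of_norm_sub_zeroCenter_le near_center
  have hre' : |ρ.re - 1.17| ≤ 0.007 := hre.trans (by norm_num)
  have hnormSq := abs_normSq_sub_le_of_norm_sub_zeroCenter_le near_center
  have hpos (t : ℝ) (ht : 0 ≤ t) : 0 < boundaryForm ρ (1 / 2 + t * I) := by
    rcases lt_or_ge t 12.8 with small | large
    · exact boundaryForm_pos_of_small hre' hnormSq ht small
    · exact boundaryForm_pos_of_large hre' hnormSq large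
  rw [abs_le] at hre him
  exact ⟨ρ, by linarith, by linarith, by linarith, by linarith,
    f2_zeros_of_boundaryForm_pos (by linarith) (by linarith) hpos hzero⟩
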